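/- Let K be an infinite field and G a graph such that gdim(G)−1 equals the maximum size of a set of pairwise disconnected edges of G. Then ara(J(G)S_m) = gdim(G). -/

import Mathlib

open MvPolynomial

/-- The irrelevant maximal ideal `m = (x_1, …, x_n)` of `S = K[x_1,…,x_n]`. -/
noncomputable def mIdeal (K : Type*) [Field K] (n : ℕ) : Ideal (MvPolynomial (Fin n) K) :=
  Ideal.span (Set.range MvPolynomial.X)

theorem mIdeal_eq_ker (K : Type*) [Field K] (n : ℕ) :
    mIdeal K n = RingHom.ker (constantCoeff : MvPolynomial (Fin n) K →+* K) := by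
  apply le_antisymm
  · rw [mIdeal, Ideal.span_le]
    rintro _ ⟨i, rfl⟩
    simp [RingHom.mem_ker]
  · intro p hp
    rw [RingHom.mem_ker] at hp
    rw [mIdeal, ← Set.image_univ, mem_ideal_span_X_image]
    intro m hm
    by_contra h
    push_neg at h
    have hm0 : m = 0 := by
      ext i
      exact h i (Set.mem_univ i)
    subst hm0
    exact (mem_support_iff.mp hm) (by simpa [constantCoeff_eq] using hp)

instance mIdeal_isMaximal (K : Type*) [Field K] (n : ℕ) : (mIdeal K n).IsMaximal := by
  rw [mIdeal_eq_ker]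
  exact RingHom.ker_isMaximal_of_surjective _ fun a => ⟨MvPolynomial.C a, by simp⟩

instance mIdeal_isPrime (K : Type*) [Field K] (n : ℕ) : (mIdeal K n).IsPrime :=
  (mIdeal_isMaximal K n).isPrime

/-- The localization `S_m` of the polynomial ring at the irrelevant maximal ideal. -/
noncomputable abbrev SLoc (K : Type*) [Field K] (n : ℕ) : Type _ :=
  Localization.AtPrime (mIdeal K n)

/-- The cover ideal `J(G) = ⋂_{{i,j} ∈ E} (x_i, x_j)`. -/
noncomputable def coverIdeal (K : Type*) [Field K] {n : ℕ} (G : SimpleGraph (Fin n)) :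
    Ideal (MvPolynomial (Fin n) K) :=
  ⨅ e ∈ G.edgeSet, Ideal.span (MvPolynomial.X '' {v : Fin n | v ∈ e})

/-- The arithmetical rank of an ideal: the least `r` such that some `r` elements generate an
ideal with the same radical. -/
noncomputable def ara {R : Type*} [CommRing R] (I : Ideal R) : ℕ :=
  sInf {r : ℕ | ∃ f : Fin r → R, Ideal.radical (Ideal.span (Set.range f)) = Ideal.radical I}

/-- A free parameter pair. -/
def IsFreeParameterPair {n r : ℕ} (G : SimpleGraph (Fin n)) (a b : Fin r → Fin n) : Prop :=
  Function.Injective a ∧ Function.Injective b ∧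
  (∀ i j : Fin r, ¬ G.Adj (a i) (a j)) ∧
  (∀ i j : Fin r, a i ≠ b j) ∧
  (∀ i : Fin r, G.Adj (a i) (b i)) ∧
  (∀ i j : Fin r, G.Adj (a i) (b j) → i ≤ j)

/-- `G` has a free parameter set of cardinality `r`. -/
def HasFreeParameterSet {n : ℕ} (G : SimpleGraph (Fin n)) (r : ℕ) : Prop :=
  ∃ a b : Fin r → Fin n, IsFreeParameterPair G a b

/-- The graphical dimension. -/
noncomputable def gdim {n : ℕ} (G : SimpleGraph (Fin n)) : ℕ :=
  sSup {r : ℕ | HasFreeParameterSet G r} + 1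

/-- `G` has `r` pairwise disconnected edges: pairwise disjoint edges with no edge of `G`
joining a vertex of one of them to a vertex of another. -/
def HasPairwiseDisconnectedEdges {n : ℕ} (G : SimpleGraph (Fin n)) (r : ℕ) : Prop :=
  ∃ e : Fin r → Fin n × Fin n, (∀ i, G.Adj (e i).1 (e i).2) ∧
    ∀ i j : Fin r, i ≠ j →
      (e i).1 ≠ (e j).1 ∧ (e i).1 ≠ (e j).2 ∧ (e i).2 ≠ (e j).1 ∧ (e i).2 ≠ (e j).2 ∧
      ¬ G.Adj (e i).1 (e j).1 ∧ ¬ G.Adj (e i).1 (e j).2 ∧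
      ¬ G.Adj (e i).2 (e j).1 ∧ ¬ G.Adj (e i).2 (e j).2

/-- The maximum size of a set of pairwise disconnected edges of `G`. -/
noncomputable def maxPairwiseDisconnected {n : ℕ} (G : SimpleGraph (Fin n)) : ℕ :=
  sSup {r : ℕ | HasPairwiseDisconnectedEdges G r}

/-!
Upper bound: a minimal `c`-cover of `G` takes few values, because its values below `c / 2`, listed
in decreasing order, belong to vertices that form a free parameter set. So the `k`-th power of the
ideal `I` of `2`-covers, which is the ideal of `2k`-covers, has at most about `k ^ (gdim G - 1)`
minimal generators. There are more monomials of degree `k` than that in `gdim G + 1` or more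
elements of `I`, so they are related modulo `m I ^ k`, and over an infinite field a linear change
of the elements turns a relation into an integral equation for one of them over the others. Hence
`I` has a reduction modulo `m` by at most `gdim G` elements, which in `S_m` has the same radical as
`I`, the radical of `J(G)`.

Lower bound: let `{a_i, b_i}` be `r` pairwise disconnected edges, and let `w` be the product of the
other variables, so that `J(G)` and `∏ (a_i, b_i)` have the same radical once `w` is inverted. Were
`J(G)` up to radical generated by `r` elements, the class of `1 / ∏ a_i b_i` in the top cohomology,
of degree `r`, of the open set `⋂ D(a_i) ∪ D(b_i)` would lift to cohomology with support in
`V(J(G))`, and so vanish where `w` is inverted. Clearing denominators puts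
`w ^ (k + 1) * (∏ a_i b_i) ^ k` in the ideal of the `a_i ^ (k + 1)` and `b_i ^ (k + 1)`, which is
absurd.
-/

section Covers

variable {V : Type*} {G : SimpleGraph V}

/-- A `c`-cover of `G`: an exponent vector whose values at the ends of each edge add up to at least
`c`. The `1`-covers that are minimal are the minimal vertex covers. -/
def IsCover (G : SimpleGraph V) (c : ℕ) (α : V →₀ ℕ) : Prop :=
  ∀ ⦃v w⦄, G.Adj v w → c ≤ α v + α w

namespace IsCover

variable {c d : ℕ} {α β : V →₀ ℕ}

theorem mono (hα : IsCover G c α) (h : α ≤ β) : IsCover G c β := fun v w hvw =>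
  (hα hvw).trans (add_le_add (h v) (h w))

theorem of_le (hα : IsCover G c α) (h : d ≤ c) : IsCover G d α := fun _ _ hvw => h.trans (hα hvw)

theorem add (hα : IsCover G c α) (hβ : IsCover G d β) : IsCover G (c + d) (α + β) :=
  fun v w hvw => by
    rw [Finsupp.add_apply, Finsupp.add_apply, add_add_add_comm]
    exact add_le_add (hα hvw) (hβ hvw)

theorem exists_add_eq_of_two_mul_succ {k : ℕ} (hα : IsCover G (2 * (k + 1)) α) :
    ∃ β γ, IsCover G 2 β ∧ IsCover G (2 * k) γ ∧ β + γ = α := by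
  let β : V →₀ ℕ := α.mapRange (fun a => min 2 (a - k)) (by simp)
  have hβ : ∀ v, β v = min 2 (α v - k) := fun v => Finsupp.mapRange_apply
  refine ⟨β, α - β, fun v w hvw => ?_, fun v w hvw => ?_, ?_⟩
  · have := hα hvw
    rw [hβ, hβ]
    omega
  · have := hα hvw
    rw [Finsupp.tsub_apply, Finsupp.tsub_apply, hβ, hβ]
    omega
  · refine add_tsub_cancel_of_le fun v => ?_
    rw [hβ]
    omega

theorem tsub_single {u : V} (hα : IsCover G c α) (hu : ∀ w, G.Adj u w → α u + α w ≠ c) :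
    IsCover G c (α - Finsupp.single u 1) := by
  classical
  intro x y hxy
  have hle := hα hxy
  simp only [Finsupp.tsub_apply, Finsupp.single_apply]
  split_ifs with hx hy hy
  · exact absurd (hx.symm.trans hy) hxy.ne
  · have := hu y (hx ▸ hxy)
    subst hx
    omega
  · have := hu x (hy ▸ hxy.symm)
    subst hy
    omega
  · omega

end IsCover

variable {c : ℕ} {α : V →₀ ℕ}

theorem exists_adj_add_eq_of_minimal_of_ne_zero (hα : Minimal (IsCover G c) α) {v : V}
    (hv : α v ≠ 0) : ∃ w, G.Adj v w ∧ α v + α w = c := by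
  by_contra! htight
  have := hα.le_of_le (hα.prop.tsub_single htight) tsub_le_self v
  rw [Finsupp.tsub_apply, Finsupp.single_eq_same] at this
  omega

theorem exists_adj_add_eq_of_minimal (hG : ∀ v, ∃ w, G.Adj v w) (hα : Minimal (IsCover G c) α)
    (v : V) : ∃ w, G.Adj v w ∧ α v + α w = c := by
  by_cases hv : α v = 0
  · obtain ⟨w, hvw⟩ := hG v
    have hle := hα.prop hvw
    by_cases hw : α w = 0
    · exact ⟨w, hvw, by omega⟩
    · obtain ⟨u, -, hu⟩ := exists_adj_add_eq_of_minimal_of_ne_zero hα hw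
      exact ⟨w, hvw, by omega⟩
  · exact exists_adj_add_eq_of_minimal_of_ne_zero hα hv

end Covers

section FreeParameterSets

variable {n : ℕ} {G : SimpleGraph (Fin n)}

theorem HasFreeParameterSet.lt_gdim {r : ℕ} (h : HasFreeParameterSet G r) : r < gdim G := by
  have hbdd : BddAbove {r | HasFreeParameterSet G r} := by
    refine ⟨n, ?_⟩
    rintro r ⟨a, b, ha, -⟩
    simpa using Fintype.card_le_of_injective a ha
  exact Nat.lt_succ_of_le (le_csSup hbdd h)

variable {c : ℕ} {α : Fin n →₀ ℕ}

/-- Listing vertices with these values by decreasing value gives the free parameter set; its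
partners are vertices joined to them by tight edges. -/
theorem hasFreeParameterSet_of_minimal (hG : ∀ v, ∃ w, G.Adj v w)
    (hα : Minimal (IsCover G c) α) :
    HasFreeParameterSet G ((Finset.univ.image α).filter (2 * · < c)).card := by
  set T := (Finset.univ.image α).filter (2 * · < c)
  let value : Fin T.card → ℕ := fun i => T.orderEmbOfFin rfl i.rev
  have value_anti : ∀ i j, value j ≤ value i ↔ i ≤ j := fun i j =>
    (T.orderEmbOfFin rfl).le_iff_le.trans Fin.rev_le_rev
  have value_inj : ∀ i j, value i = value j → i = j := fun i j h =>
    le_antisymm ((value_anti _ _).mp h.ge) ((value_anti _ _).mp h.le)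
  have value_mem : ∀ i, (∃ v, α v = value i) ∧ 2 * value i < c := fun i =>
    (Finset.mem_filter.mp (T.orderEmbOfFin_mem rfl i.rev)).imp_left fun h => by simpa using h
  choose a ha using fun i => (value_mem i).1
  choose b hab hb using fun i => exists_adj_add_eq_of_minimal hG hα (a i)
  simp only [ha] at hb
  refine ⟨a, b, fun i j hij => value_inj i j (by rw [← ha, ← ha, hij]), fun i j hij => ?_,
    fun i j hij => ?_, fun i j hij => ?_, hab, fun i j hij => (value_anti i j).mp ?_⟩
  · exact value_inj i j (Nat.add_right_cancel ((hb i).trans (hij ▸ hb j).symm))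
  · have := hα.prop hij
    have := (value_mem i).2
    have := (value_mem j).2
    simp only [ha] at *
    omega
  · have := hb j
    have := (value_mem i).2
    have := (value_mem j).2
    rw [← hij, ha] at *
    omega
  · have := hα.prop hij
    have := hb j
    rw [ha] at *
    omega

theorem exists_values_of_minimal (hG : ∀ v, ∃ w, G.Adj v w) (hα : Minimal (IsCover G c) α) :
    ∃ s : Fin (gdim G - 1) → ℕ, (∀ i, s i ≤ c) ∧
      ∀ v, α v = c / 2 ∨ ∃ i, α v = s i ∨ α v = c - s i := by
  set T := (Finset.univ.image α).filter (2 * · < c) with hT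
  have hcard : Fintype.card T ≤ Fintype.card (Fin (gdim G - 1)) := by
    simpa using Nat.le_sub_one_of_lt (hasFreeParameterSet_of_minimal hG hα).lt_gdim
  obtain ⟨e⟩ := Function.Embedding.nonempty_of_card_le hcard
  let s : Fin (gdim G - 1) → ℕ := Function.extend e Subtype.val 0
  have hse : ∀ t : T, s (e t) = t := e.injective.extend_apply _ _
  have hs : ∀ v, 2 * α v < c → ∃ i, α v = s i := fun v hv =>
    have hv : α v ∈ T := by simp [hT, hv]
    ⟨e ⟨α v, hv⟩, (hse ⟨α v, hv⟩).symm⟩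
  refine ⟨s, fun i => ?_, fun v => ?_⟩
  · by_cases hi : ∃ t, e t = i
    · obtain ⟨t, rfl⟩ := hi
      have := (Finset.mem_filter.mp t.2).2
      rw [hse]
      omega
    · simp only [s, Function.extend_apply' _ _ _ hi, Pi.zero_apply, zero_le]
  · rcases lt_trichotomy (2 * α v) c with h | h | h
    · obtain ⟨i, hi⟩ := hs v h
      exact .inr ⟨i, .inl hi⟩
    · exact .inl (by omega)
    · obtain ⟨w, -, hw⟩ := exists_adj_add_eq_of_minimal hG hα v
      obtain ⟨i, hi⟩ := hs w (by omega)
      exact .inr ⟨i, .inr (by omega)⟩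

theorem encard_minimal_isCover_le (hG : ∀ v, ∃ w, G.Adj v w) (c : ℕ) :
    {α | Minimal (IsCover G c) α}.encard ≤
      ((c + 1) ^ (gdim G - 1) * (2 * (gdim G - 1) + 1) ^ n : ℕ) := by
  classical
  set r := gdim G - 1
  let values : (Fin r → ℕ) → Finset ℕ := fun s =>
    insert (c / 2) (Finset.univ.image s ∪ Finset.univ.image (c - s ·))
  let vectors : (Fin r → ℕ) → Finset (Fin n →₀ ℕ) := fun s =>
    (Fintype.piFinset fun _ => values s).map Finsupp.equivFunOnFinite.symm.toEmbedding
  let W := (Fintype.piFinset fun _ : Fin r => Finset.range (c + 1)).biUnion vectors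
  have hvectors : ∀ s, (vectors s).card ≤ (2 * r + 1) ^ n := fun s => by
    rw [Finset.card_map, Fintype.card_piFinset_const]
    gcongr
    refine (Finset.card_insert_le _ _).trans (Nat.succ_le_succ ?_)
    refine (Finset.card_union_le _ _).trans ?_
    rw [two_mul]
    exact add_le_add (Finset.card_image_le.trans_eq (by simp))
      (Finset.card_image_le.trans_eq (by simp))
  have hW : W.card ≤ (c + 1) ^ r * (2 * r + 1) ^ n := by
    refine (Finset.card_biUnion_le_card_mul _ vectors _ fun s _ => hvectors s).trans_eq ?_
    simp
  have hsub : {α | Minimal (IsCover G c) α} ⊆ W := fun α hα => by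
    obtain ⟨s, hs, hαs⟩ := exists_values_of_minimal hG hα
    simp only [W, vectors, values, Finset.coe_biUnion, Set.mem_iUnion, Finset.mem_coe,
      Fintype.mem_piFinset, Finset.mem_range, Finset.mem_map_equiv, Equiv.symm_symm,
      Finset.mem_insert, Finset.mem_union, Finset.mem_image, Finset.mem_univ, true_and]
    refine ⟨s, fun i => Nat.lt_succ_of_le (hs i), fun v => (hαs v).imp_right ?_⟩
    rintro ⟨i, hi | hi⟩
    · exact .inl ⟨i, hi.symm⟩
    · exact .inr ⟨i, hi.symm⟩
  exact (Set.encard_le_encard hsub).trans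
    ((Set.encard_coe_eq_coe_finsetCard W).trans_le (by exact_mod_cast hW))

end FreeParameterSets

section HomogeneousPolynomials

variable {σ K : Type*}

theorem finrank_homogeneousSubmodule [CommRing K] [Nontrivial K] [Fintype σ] (D : ℕ) :
    Module.finrank K (homogeneousSubmodule σ K D) = (Fintype.card σ).multichoose D := by
  classical
  have hsupp : homogeneousSubmodule σ K D = restrictSupport K {d | d.degree = D} :=
    homogeneousSubmodule_eq_finsupp_supported σ K D
  rw [hsupp, Module.finrank_eq_nat_card_basis (basisRestrictSupport K _),
    ← Sym.card_sym_eq_multichoose, ← Nat.card_eq_fintype_card]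
  exact Nat.card_congr (Sym.equivNatSum σ D).symm

theorem exists_isHomogeneous_map_eq_zero [Field K] [Fintype σ] {M : Type*} [AddCommGroup M]
    [Module K M] [Module.Finite K M] (φ : MvPolynomial σ K →ₗ[K] M) {D : ℕ}
    (h : Module.finrank K M < (Fintype.card σ).multichoose D) :
    ∃ P : MvPolynomial σ K, P.IsHomogeneous D ∧ P ≠ 0 ∧ φ P = 0 := by
  rw [← finrank_homogeneousSubmodule (K := K)] at h
  have := Module.finite_of_finrank_pos (Nat.zero_lt_of_lt h)
  obtain ⟨P, hP, hP0⟩ := Submodule.exists_mem_ne_zero_of_ne_bot (LinearMap.ker_ne_bot_of_finrank_lt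
    (f := φ ∘ₗ (homogeneousSubmodule σ K D).subtype) h)
  exact ⟨P, P.2, fun h0 => hP0 (Subtype.ext h0), hP⟩

theorem exists_pow_mul_lt_multichoose {r t : ℕ} (hrt : r < t) (C : ℕ) :
    ∃ d : ℕ, (2 * (d + 1) + 1) ^ r * C < (t + 1).multichoose (d + 1) := by
  set d := 2 ^ r * C * t.factorial
  refine ⟨d, ?_⟩
  have hmultichoose : (d + 2) ^ t ≤ t.factorial * (t + 1).multichoose (d + 1) := by
    have hchoose : (t + 1).multichoose (d + 1) = (d + 2 + t - 1).choose t := by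
      rw [Nat.multichoose_eq, show t + 1 + (d + 1) - 1 = d + 1 + t by omega,
        show d + 2 + t - 1 = d + 1 + t by omega, Nat.choose_symm_add]
    rw [hchoose, ← Nat.ascFactorial_eq_factorial_mul_choose']
    exact Nat.pow_succ_le_ascFactorial _ _
  refine Nat.lt_of_mul_lt_mul_left (a := t.factorial) (lt_of_lt_of_le ?_ hmultichoose)
  calc t.factorial * ((2 * (d + 1) + 1) ^ r * C)
      ≤ t.factorial * ((2 * (d + 2)) ^ r * C) := by gcongr; omega
    _ = (d + 2) ^ r * d := by rw [mul_pow]; ring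
    _ < (d + 2) ^ r * (d + 2) := by gcongr; omega
    _ = (d + 2) ^ (r + 1) := (pow_succ _ _).symm
    _ ≤ (d + 2) ^ t := Nat.pow_le_pow_right (by omega) hrt

theorem aeval_smul_eq_eval_smul_pow [CommSemiring K] {S : Type*} [CommSemiring S] [Algebra K S]
    {P : MvPolynomial σ K} {d : ℕ} (hP : P.IsHomogeneous d) (c : σ → K) (x : S) :
    aeval (fun i => c i • x) P = eval c P • x ^ d := by
  rw [aeval_def, eval₂_eq, eval_eq, Finset.sum_smul]
  refine Finset.sum_congr rfl fun e he => ?_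
  simp only [smul_pow, Finset.prod_smul]
  rw [Finset.prod_pow_eq_pow_sum, ← hP.degree_eq_sum_deg_support he, mul_smul_comm,
    ← Algebra.smul_def, smul_smul, mul_comm]

theorem exists_eval_ne_zero_of_isHomogeneous [Field K] [Infinite K] {P : MvPolynomial σ K} {d : ℕ}
    (hP : P.IsHomogeneous d) (hP0 : P ≠ 0) (i : σ) : ∃ c : σ → K, c i = 1 ∧ eval c P ≠ 0 := by
  obtain ⟨a, ha⟩ : ∃ a : σ → K, eval a (X i * P) ≠ 0 := by
    by_contra! h
    exact mul_ne_zero (X_ne_zero i) hP0 (MvPolynomial.funext fun x => by rw [h x, map_zero])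
  rw [map_mul, eval_X] at ha
  have hai := left_ne_zero_of_mul ha
  refine ⟨fun j => a j * (a i)⁻¹, mul_inv_cancel₀ hai, ?_⟩
  have hscale : eval (fun j => a j * (a i)⁻¹) P = eval a P * (a i)⁻¹ ^ d :=
    aeval_smul_eq_eval_smul_pow hP a (a i)⁻¹
  rw [hscale]
  exact mul_ne_zero (right_ne_zero_of_mul ha) (pow_ne_zero _ (inv_ne_zero hai))

end HomogeneousPolynomials

section Reductions

variable {S : Type*} [CommRing S] {m A F I : Ideal S}

/-- `F` is a reduction of `I` modulo `m`: the ideal `F` is contained in `I`, and some power of `I`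
is generated by `F` times the previous power together with multiples by `m`. For a local ring with
maximal ideal `m`, these are the reductions of `I`. -/
def IsReductionMod (m F I : Ideal S) : Prop :=
  F ≤ I ∧ ∃ k, I ^ (k + 1) ≤ F * I ^ k ⊔ m * I ^ (k + 1)

theorem IsReductionMod.refl (m I : Ideal S) : IsReductionMod m I I :=
  ⟨le_rfl, 0, by simp⟩

theorem IsReductionMod.exists_pow_add_le (h : IsReductionMod m F I) :
    ∃ k, ∀ j, I ^ (j + k) ≤ F ^ j * I ^ k ⊔ m * I ^ (j + k) := by
  obtain ⟨hFI, k, hk⟩ := h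
  refine ⟨k, fun j => ?_⟩
  induction j with
  | zero => simp
  | succ j ih =>
    calc I ^ (j + 1 + k) = I * I ^ (j + k) := by ring
      _ ≤ I * (F ^ j * I ^ k ⊔ m * I ^ (j + k)) := Ideal.mul_mono_right ih
      _ = F ^ j * I ^ (k + 1) ⊔ m * I ^ (j + 1 + k) := by rw [Ideal.mul_sup]; ring_nf
      _ ≤ F ^ j * (F * I ^ k ⊔ m * I ^ (k + 1)) ⊔ m * I ^ (j + 1 + k) :=
        sup_le_sup_right (Ideal.mul_mono_right hk) _
      _ = F ^ (j + 1) * I ^ k ⊔ m * (F ^ j * I ^ (k + 1)) ⊔ m * I ^ (j + 1 + k) := by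
        rw [Ideal.mul_sup]; ring_nf
      _ ≤ F ^ (j + 1) * I ^ k ⊔ m * (I ^ j * I ^ (k + 1)) ⊔ m * I ^ (j + 1 + k) := by gcongr
      _ = F ^ (j + 1) * I ^ k ⊔ m * I ^ (j + 1 + k) := by
        rw [← pow_add, show j + (k + 1) = j + 1 + k by ring, sup_assoc, sup_idem]

theorem IsReductionMod.of_pow_succ_le (h : IsReductionMod m F I) (hAF : A ≤ F) {d : ℕ}
    (hA : F ^ (d + 1) ≤ A * I ^ d ⊔ m * I ^ (d + 1)) : IsReductionMod m A I := by
  obtain ⟨k, hk⟩ := h.exists_pow_add_le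
  refine ⟨hAF.trans h.1, d + k, ?_⟩
  calc I ^ (d + k + 1) = I ^ (d + 1 + k) := by ring
    _ ≤ F ^ (d + 1) * I ^ k ⊔ m * I ^ (d + 1 + k) := hk (d + 1)
    _ ≤ (A * I ^ d ⊔ m * I ^ (d + 1)) * I ^ k ⊔ m * I ^ (d + 1 + k) :=
      sup_le_sup_right (Ideal.mul_mono_left hA) _
    _ = A * I ^ (d + k) ⊔ m * I ^ (d + 1 + k) := by
      rw [Ideal.sup_mul, mul_assoc, mul_assoc, ← pow_add, ← pow_add, sup_assoc, sup_idem]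
    _ = A * I ^ (d + k) ⊔ m * I ^ (d + k + 1) := by ring_nf

theorem IsReductionMod.map {T : Type*} [CommRing T] (h : IsReductionMod m F I) (φ : S →+* T) :
    IsReductionMod (m.map φ) (F.map φ) (I.map φ) := by
  obtain ⟨hFI, k, hk⟩ := h
  refine ⟨Ideal.map_mono hFI, k, ?_⟩
  simpa only [Ideal.map_mul, Ideal.map_pow, Ideal.map_sup] using Ideal.map_mono (f := φ) hk

theorem IsReductionMod.radical_eq (h : IsReductionMod m F I) (hI : I.FG)
    (hm : m ≤ Ideal.jacobson ⊥) : F.radical = I.radical := by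
  obtain ⟨hFI, k, hk⟩ := h
  have hpow : I ^ (k + 1) ≤ F * I ^ k :=
    Submodule.le_of_le_smul_of_le_jacobson_bot hI.pow hm hk
  refine (Ideal.radical_mono hFI).antisymm ?_
  rw [← Ideal.radical_pow I k.succ_ne_zero]
  exact Ideal.radical_mono (hpow.trans Ideal.mul_le_left)

theorem sup_pow_succ_le_mul_sup (A B : Ideal S) (d : ℕ) :
    (A ⊔ B) ^ (d + 1) ≤ A * (A ⊔ B) ^ d ⊔ B ^ (d + 1) := by
  induction d with
  | zero => simp
  | succ d ih =>
    have hB : B ^ (d + 1) * A ≤ A * (A ⊔ B) ^ (d + 1) := by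
      rw [mul_comm]
      exact Ideal.mul_mono_right (Ideal.pow_right_mono le_sup_right _)
    calc (A ⊔ B) ^ (d + 1 + 1) = (A ⊔ B) ^ (d + 1) * (A ⊔ B) := pow_succ _ _
      _ ≤ (A * (A ⊔ B) ^ d ⊔ B ^ (d + 1)) * (A ⊔ B) := Ideal.mul_mono_left ih
      _ = A * (A ⊔ B) ^ (d + 1) ⊔ (B ^ (d + 1) * A ⊔ B ^ (d + 1 + 1)) := by
        rw [Ideal.sup_mul, mul_assoc, ← pow_succ, Ideal.mul_sup, ← pow_succ]
      _ ≤ A * (A ⊔ B) ^ (d + 1) ⊔ B ^ (d + 1 + 1) :=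
        sup_le le_sup_left (sup_le_sup_right hB _)

theorem prod_map_mem_pow_card {σ : Type*} {f : σ → S} (hf : ∀ i, f i ∈ F) (s : Multiset σ) :
    (s.map f).prod ∈ F ^ s.card := by
  induction s using Multiset.induction with
  | empty => simp
  | cons i s ih =>
    rw [Multiset.map_cons, Multiset.prod_cons, Multiset.card_cons, pow_succ']
    exact Ideal.mul_mem_mul (hf i) ih

theorem prod_map_sub_prod_map_mem {σ : Type*} {f g : σ → S} (hf : ∀ i, f i ∈ F)
    (hg : ∀ i, g i ∈ F) (hfg : ∀ i, f i - g i ∈ A) (s : Multiset σ) :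
    (s.map f).prod - (s.map g).prod ∈ A * F ^ (s.card - 1) := by
  induction s using Multiset.induction with
  | empty => simp
  | cons i s ih =>
    have hrec : f i * ((s.map f).prod - (s.map g).prod) ∈ A * F ^ s.card := by
      rcases s.empty_or_exists_mem with rfl | ⟨j, hj⟩
      · simp
      · rw [← Nat.succ_pred_eq_of_pos (Multiset.card_pos_iff_exists_mem.mpr ⟨j, hj⟩), pow_succ',
          mul_left_comm]
        exact Ideal.mul_mem_mul (hf i) ih
    have hstep : (f i - g i) * (s.map g).prod ∈ A * F ^ s.card :=
      Ideal.mul_mem_mul (hfg i) (prod_map_mem_pow_card hg s)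
    simpa [mul_sub, sub_mul] using add_mem hrec hstep

section Algebra

variable {σ K : Type*} [CommSemiring K] [Algebra K S]

theorem aeval_eq_sum_prod_map (f : σ → S) (P : MvPolynomial σ K) :
    aeval f P = ∑ e ∈ P.support, coeff e P • (e.toMultiset.map f).prod := by
  rw [aeval_def, eval₂_eq]
  refine Finset.sum_congr rfl fun e _ => ?_
  rw [Finsupp.toMultiset_map, Finsupp.prod_toMultiset,
    Finsupp.prod_mapDomain_index (fun _ => pow_zero _) (fun _ _ _ => pow_add _ _ _),
    Algebra.smul_def, Finsupp.prod]

theorem card_toMultiset_of_mem_support {P : MvPolynomial σ K} {d : ℕ} (hP : P.IsHomogeneous d)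
    {e : σ →₀ ℕ} (he : e ∈ P.support) : e.toMultiset.card = d := by
  rw [Finsupp.card_toMultiset]
  exact (hP.degree_eq_sum_deg_support he).symm

theorem aeval_mem_pow {P : MvPolynomial σ K} {d : ℕ} (hP : P.IsHomogeneous d)
    {f : σ → S} (hf : ∀ i, f i ∈ F) : aeval f P ∈ F ^ d := by
  rw [aeval_eq_sum_prod_map]
  refine sum_mem fun e he => Submodule.smul_of_tower_mem _ _ ?_
  exact card_toMultiset_of_mem_support hP he ▸ prod_map_mem_pow_card hf _

theorem aeval_sub_aeval_mem {P : MvPolynomial σ K} {d : ℕ} (hP : P.IsHomogeneous (d + 1))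
    {f g : σ → S} (hf : ∀ i, f i ∈ F) (hg : ∀ i, g i ∈ F) (hfg : ∀ i, f i - g i ∈ A) :
    aeval f P - aeval g P ∈ A * F ^ d := by
  rw [aeval_eq_sum_prod_map, aeval_eq_sum_prod_map, ← Finset.sum_sub_distrib]
  refine sum_mem fun e he => ?_
  rw [← smul_sub]
  refine Submodule.smul_of_tower_mem _ _ ?_
  simpa only [card_toMultiset_of_mem_support hP he, Nat.add_sub_cancel]
    using prod_map_sub_prod_map_mem hf hg hfg e.toMultiset

end Algebra

section InfiniteField

variable {K : Type*} [Field K] [Infinite K] [Algebra K S]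

/-- After a linear change of the generators the relation has a nonzero coefficient at a power of the
first one, which is then a combination of multiples of the others and of elements of `m`. -/
theorem IsReductionMod.exists_of_relation {t d : ℕ} {f : Fin (t + 1) → S}
    (hf : IsReductionMod m (Ideal.span (Set.range f)) I) {P : MvPolynomial (Fin (t + 1)) K}
    (hP : P.IsHomogeneous (d + 1)) (hP0 : P ≠ 0) (hrel : aeval f P ∈ m * I ^ (d + 1)) :
    ∃ g : Fin t → S, IsReductionMod m (Ideal.span (Set.range g)) I := by
  obtain ⟨c, hc0, hcP⟩ := exists_eval_ne_zero_of_isHomogeneous hP hP0 0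
  let g : Fin t → S := fun i => f i.succ - c i.succ • f 0
  set F := Ideal.span (Set.range f)
  set A := Ideal.span (Set.range g)
  have hfF : ∀ i, f i ∈ F := fun i => Ideal.subset_span ⟨i, rfl⟩
  have hcF : ∀ i, c i • f 0 ∈ F := fun i => Submodule.smul_of_tower_mem _ _ (hfF 0)
  have hfA : ∀ i, f i - c i • f 0 ∈ A :=
    Fin.cases (by simp [hc0]) fun i => Ideal.subset_span ⟨i, rfl⟩
  have hAF : A ≤ F := by
    rw [Ideal.span_le, Set.range_subset_iff]
    exact fun i => F.sub_mem (hfF _) (hcF _)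
  have hF : F = A ⊔ Ideal.span {f 0} := by
    refine le_antisymm ?_ (sup_le hAF ((Ideal.span_singleton_le_iff_mem _).mpr (hfF 0)))
    rw [Ideal.span_le, Set.range_subset_iff]
    refine fun i => (sub_add_cancel (f i) (c i • f 0)) ▸ Submodule.add_mem_sup (hfA i) ?_
    exact Submodule.smul_of_tower_mem _ _ (Ideal.mem_span_singleton_self _)
  have hA : A * F ^ d ≤ A * I ^ d := Ideal.mul_mono_right (Ideal.pow_right_mono hf.1 _)
  have hf0 : f 0 ^ (d + 1) ∈ A * I ^ d ⊔ m * I ^ (d + 1) := by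
    have hmem : aeval (fun i => c i • f 0) P ∈ A * I ^ d ⊔ m * I ^ (d + 1) := by
      rw [← sub_sub_cancel (aeval f P) (aeval (fun i => c i • f 0) P)]
      exact sub_mem (Ideal.mem_sup_right hrel)
        (Ideal.mem_sup_left (hA (aeval_sub_aeval_mem hP hfF hcF hfA)))
    rw [aeval_smul_eq_eval_smul_pow hP] at hmem
    exact (Submodule.smul_mem_iff' _ (Units.mk0 _ hcP)).mp hmem
  refine ⟨g, hf.of_pow_succ_le hAF (d := d) ?_⟩
  calc F ^ (d + 1) ≤ A * F ^ d ⊔ Ideal.span {f 0} ^ (d + 1) := by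
        rw [hF]
        exact sup_pow_succ_le_mul_sup _ _ _
    _ ≤ A * I ^ d ⊔ m * I ^ (d + 1) := by
        rw [Ideal.span_singleton_pow]
        exact sup_le (hA.trans le_sup_left) ((Ideal.span_singleton_le_iff_mem _).mpr hf0)

theorem exists_isReductionMod_of_forall_relation (hI : I.FG) {N : ℕ}
    (hrel : ∀ t ≥ N, ∀ f : Fin (t + 1) → S, (∀ i, f i ∈ I) → ∃ d,
      ∃ P : MvPolynomial (Fin (t + 1)) K,
        P.IsHomogeneous (d + 1) ∧ P ≠ 0 ∧ aeval f P ∈ m * I ^ (d + 1)) :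
    ∃ t ≤ N, ∃ f : Fin t → S, IsReductionMod m (Ideal.span (Set.range f)) I := by
  obtain ⟨t, ht⟩ : ∃ t, ∃ f : Fin t → S, IsReductionMod m (Ideal.span (Set.range f)) I := by
    obtain ⟨t, f, rfl⟩ := Submodule.fg_iff_exists_fin_generating_family.mp hI
    exact ⟨t, f, .refl _ _⟩
  induction t with
  | zero => exact ⟨0, Nat.zero_le _, ht⟩
  | succ t ih =>
    by_cases hle : t + 1 ≤ N
    · exact ⟨t + 1, hle, ht⟩
    · obtain ⟨f, hf⟩ := ht
      obtain ⟨d, P, hP, hP0, hPf⟩ :=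
        hrel t (by omega) f fun i => hf.1 (Ideal.subset_span ⟨i, rfl⟩)
      exact ih (hf.exists_of_relation hP hP0 hPf)

end InfiniteField

end Reductions

section SymbolicPowers

variable {V K : Type*} [CommSemiring K] {G : SimpleGraph V} {c d : ℕ}

/-- The ideal spanned by the monomials whose exponents are `c`-covers of `G`, that is, the `c`-th
symbolic power of the cover ideal. -/
noncomputable def symbolicCoverIdeal (K : Type*) [CommSemiring K] (G : SimpleGraph V) (c : ℕ) :
    Ideal (MvPolynomial V K) :=
  restrictSupportIdeal K {α | IsCover G c α} fun _ _ hle hα => hα.mono hle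

theorem mem_symbolicCoverIdeal {p : MvPolynomial V K} :
    p ∈ symbolicCoverIdeal K G c ↔ ∀ α ∈ p.support, IsCover G c α :=
  Iff.rfl

theorem monomial_mem_symbolicCoverIdeal {α : V →₀ ℕ} (hα : IsCover G c α) (a : K) :
    monomial α a ∈ symbolicCoverIdeal K G c :=
  (monomial_mem_restrictSupport (R := K)).mpr (.inl hα)

theorem symbolicCoverIdeal_le_iff {I : Ideal (MvPolynomial V K)} :
    symbolicCoverIdeal K G c ≤ I ↔ ∀ α, IsCover G c α → monomial α (1 : K) ∈ I := by
  refine ⟨fun h α hα => h (monomial_mem_symbolicCoverIdeal hα 1), fun h p hp => ?_⟩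
  rw [p.as_sum]
  refine sum_mem fun α hα => ?_
  rw [← mul_one (coeff α p), ← C_mul_monomial]
  exact I.mul_mem_left _ (h α (hp hα))

theorem symbolicCoverIdeal_anti (h : d ≤ c) :
    symbolicCoverIdeal K G c ≤ symbolicCoverIdeal K G d :=
  symbolicCoverIdeal_le_iff.mpr fun _ hα => monomial_mem_symbolicCoverIdeal (hα.of_le h) 1

theorem symbolicCoverIdeal_zero : symbolicCoverIdeal K G 0 = ⊤ :=
  (Ideal.eq_top_iff_one _).mpr fun _ _ _ _ _ => Nat.zero_le _

theorem symbolicCoverIdeal_mul_le (c d : ℕ) :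
    symbolicCoverIdeal K G c * symbolicCoverIdeal K G d ≤ symbolicCoverIdeal K G (c + d) := by
  classical
  refine Ideal.mul_le.mpr fun p hp q hq γ hγ => ?_
  obtain ⟨α, hα, β, hβ, rfl⟩ := Finset.mem_add.mp (support_mul p q hγ)
  exact IsCover.add (hp hα) (hq hβ)

theorem symbolicCoverIdeal_two_pow (k : ℕ) :
    symbolicCoverIdeal K G 2 ^ k = symbolicCoverIdeal K G (2 * k) := by
  induction k with
  | zero => rw [pow_zero, mul_zero, symbolicCoverIdeal_zero, Ideal.one_eq_top]
  | succ k ih =>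
    rw [pow_succ', ih]
    refine le_antisymm ?_ (symbolicCoverIdeal_le_iff.mpr fun α hα => ?_)
    · exact (symbolicCoverIdeal_mul_le _ _).trans_eq (by rw [mul_add_one, add_comm])
    · obtain ⟨β, γ, hβ, hγ, rfl⟩ := hα.exists_add_eq_of_two_mul_succ
      rw [← mul_one (1 : K), ← monomial_mul]
      exact Ideal.mul_mem_mul (monomial_mem_symbolicCoverIdeal hβ 1)
        (monomial_mem_symbolicCoverIdeal hγ 1)

end SymbolicPowers

section CoverIdeals

variable {K : Type*} [Field K] {n : ℕ} {G : SimpleGraph (Fin n)}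

theorem coverIdeal_eq_symbolicCoverIdeal_one : coverIdeal K G = symbolicCoverIdeal K G 1 := by
  have hsum : ∀ a b : ℕ, 1 ≤ a + b ↔ a ≠ 0 ∨ b ≠ 0 := by omega
  ext p
  simp only [coverIdeal, Ideal.mem_iInf, mem_symbolicCoverIdeal, mem_ideal_span_X_image,
    Sym2.forall, SimpleGraph.mem_edgeSet, Set.mem_ofPred_eq, Sym2.mem_iff,
    exists_eq_left, or_and_right, exists_or, IsCover, hsum]
  exact ⟨fun h α hα v w hvw => h v w hvw α hα, fun h v w hvw α hα => h α hα hvw⟩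

theorem radical_symbolicCoverIdeal_two :
    (symbolicCoverIdeal K G 2).radical = (coverIdeal K G).radical := by
  rw [coverIdeal_eq_symbolicCoverIdeal_one]
  refine (Ideal.radical_mono (symbolicCoverIdeal_anti one_le_two)).antisymm ?_
  rw [← Ideal.radical_pow (symbolicCoverIdeal K G 1) two_ne_zero, sq]
  exact Ideal.radical_mono (symbolicCoverIdeal_mul_le 1 1)

theorem mem_mIdeal_mul_symbolicCoverIdeal {c : ℕ} {p : MvPolynomial (Fin n) K}
    (hp : p ∈ symbolicCoverIdeal K G c)
    (hmin : ∀ α, Minimal (IsCover G c) α → coeff α p = 0) :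
    p ∈ mIdeal K n * symbolicCoverIdeal K G c := by
  rw [p.as_sum]
  refine sum_mem fun α hα => ?_
  obtain ⟨β, hβα, hβ⟩ := exists_minimal_le_of_wellFoundedLT (IsCover G c) α (hp hα)
  have hne : β ≠ α := by
    rintro rfl
    exact mem_support_iff.mp hα (hmin β hβ)
  obtain ⟨i, hi⟩ : ∃ i, β i < α i := (Pi.lt_def.mp (lt_of_le_of_ne hβα hne)).2
  have hβi : β ≤ α - Finsupp.single i 1 := fun j => by
    have := hβα j
    rw [Finsupp.tsub_apply]
    rcases eq_or_ne j i with rfl | hj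
    · rw [Finsupp.single_eq_same]
      omega
    · simpa [Finsupp.single_eq_of_ne hj] using this
  have hα_eq : monomial α (coeff α p) = X i * monomial (α - Finsupp.single i 1) (coeff α p) := by
    rw [X, monomial_mul, one_mul, add_tsub_cancel_of_le (Finsupp.single_le_iff.mpr (by omega))]
  rw [hα_eq]
  exact Ideal.mul_mem_mul (Ideal.subset_span ⟨i, rfl⟩)
    (monomial_mem_symbolicCoverIdeal (hβ.prop.mono hβi) _)

/-- In degree `D` there are about `D ^ t` monomials in `t + 1` variables, but only about
`D ^ (gdim G - 1)` minimal generators of the `D`-th power. -/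
theorem exists_relation_symbolicCoverIdeal (hG : ∀ v, ∃ w, G.Adj v w) {t : ℕ} (ht : gdim G ≤ t)
    {f : Fin (t + 1) → MvPolynomial (Fin n) K} (hf : ∀ i, f i ∈ symbolicCoverIdeal K G 2) :
    ∃ d, ∃ P : MvPolynomial (Fin (t + 1)) K, P.IsHomogeneous (d + 1) ∧ P ≠ 0 ∧
      aeval f P ∈ mIdeal K n * symbolicCoverIdeal K G 2 ^ (d + 1) := by
  have hgdim : gdim G - 1 < t := lt_of_lt_of_le (Nat.sub_one_lt (Nat.succ_ne_zero _)) ht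
  obtain ⟨d, hd⟩ := exists_pow_mul_lt_multichoose hgdim ((2 * (gdim G - 1) + 1) ^ n)
  obtain ⟨hfin, hcard⟩ := Set.encard_le_coe_iff_finite_ncard_le.mp
    (encard_minimal_isCover_le hG (2 * (d + 1)))
  have := hfin.fintype
  let φ : MvPolynomial (Fin (t + 1)) K →ₗ[K] ({α | Minimal (IsCover G (2 * (d + 1))) α} → K) :=
    LinearMap.pi fun α => lcoeff K α.1 ∘ₗ (aeval f).toLinearMap
  obtain ⟨P, hP, hP0, hPφ⟩ := exists_isHomogeneous_map_eq_zero φ (D := d + 1) (by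
    rw [Module.finrank_fintype_fun_eq_card, Fintype.card_fin, ← Nat.card_eq_fintype_card,
      Nat.card_coe_set_eq]
    exact hcard.trans_lt hd)
  refine ⟨d, P, hP, hP0, ?_⟩
  have hmem := aeval_mem_pow hP hf
  rw [symbolicCoverIdeal_two_pow] at hmem ⊢
  exact mem_mIdeal_mul_symbolicCoverIdeal hmem fun α hα => congr_fun hPφ ⟨α, hα⟩

theorem exists_isReductionMod_symbolicCoverIdeal [Infinite K] (hG : ∀ v, ∃ w, G.Adj v w) :
    ∃ t ≤ gdim G, ∃ f : Fin t → MvPolynomial (Fin n) K,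
      IsReductionMod (mIdeal K n) (Ideal.span (Set.range f)) (symbolicCoverIdeal K G 2) :=
  exists_isReductionMod_of_forall_relation (IsNoetherian.noetherian _)
    fun _ ht _ hf => exists_relation_symbolicCoverIdeal hG ht hf

end CoverIdeals

section ArithmeticalRank

variable {R : Type*} [CommRing R]

theorem ara_le_of_radical_eq {I : Ideal R} {r : ℕ} (f : Fin r → R)
    (hf : (Ideal.span (Set.range f)).radical = I.radical) : ara I ≤ r :=
  Nat.sInf_le ⟨f, hf⟩

theorem exists_radical_span_range_eq_of_fg {I : Ideal R} (hI : I.FG) :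
    ∃ f : Fin (ara I) → R, (Ideal.span (Set.range f)).radical = I.radical := by
  obtain ⟨r, f, hf⟩ := Submodule.fg_iff_exists_fin_generating_family.mp hI
  exact Nat.sInf_mem (s := {r | ∃ f : Fin r → R, (Ideal.span (Set.range f)).radical = I.radical})
    ⟨r, f, by rw [Ideal.span, hf]⟩

theorem radical_map_radical {S : Type*} [CommRing S] (φ : R →+* S) (I : Ideal R) :
    (I.radical.map φ).radical = (I.map φ).radical :=
  (Ideal.radical_le_radical_iff.mpr (Ideal.map_radical_le φ)).antisymm
    (Ideal.radical_mono (Ideal.map_mono Ideal.le_radical))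

variable {K : Type*} [Field K] {n : ℕ} {G : SimpleGraph (Fin n)}

theorem ara_map_coverIdeal_le_gdim [Infinite K] (hG : ∀ v, ∃ w, G.Adj v w) :
    ara ((coverIdeal K G).map (algebraMap (MvPolynomial (Fin n) K) (SLoc K n))) ≤ gdim G := by
  obtain ⟨t, ht, f, hf⟩ := exists_isReductionMod_symbolicCoverIdeal (K := K) hG
  set φ := algebraMap (MvPolynomial (Fin n) K) (SLoc K n)
  have hm : (mIdeal K n).map φ ≤ Ideal.jacobson ⊥ := by
    rw [IsLocalRing.jacobson_eq_maximalIdeal _ bot_ne_top]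
    exact Localization.AtPrime.map_eq_maximalIdeal.le
  refine (ara_le_of_radical_eq (φ ∘ f) ?_).trans ht
  calc (Ideal.span (Set.range (φ ∘ f))).radical
      = ((Ideal.span (Set.range f)).map φ).radical := by rw [Ideal.map_span, Set.range_comp]
    _ = ((symbolicCoverIdeal K G 2).map φ).radical :=
      (hf.map φ).radical_eq (IsNoetherian.noetherian _) hm
    _ = ((symbolicCoverIdeal K G 2).radical.map φ).radical :=
      (radical_map_radical φ _).symm
    _ = ((coverIdeal K G).radical.map φ).radical := by rw [radical_symbolicCoverIdeal_two]
    _ = ((coverIdeal K G).map φ).radical := radical_map_radical φ _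

end ArithmeticalRank

section LocalizedComplexes

universe u

theorem mul_dvd_mul_pow_succ {R : Type*} [CommMonoid R] {a b : R} {k : ℕ} (h : a ∣ b ^ k) (c : R) :
    a * c ∣ (b * c) ^ (k + 1) := by
  rw [mul_pow, pow_succ c]
  exact mul_dvd_mul (h.trans (pow_dvd_pow _ k.le_succ)) (dvd_mul_left _ _)

/-- A complex over the field `L` with graded subcomplexes `sections g`, for `g : R`, that behave
like the localizations at `g` of a complex of `R`-modules, or like its sections on the basic open
set `D(g)`. All localizations live in one ambient space, so that no localization maps are needed. -/
structure LocalizedComplex (R : Type*) (L : Type u) [CommRing R] [Field L] [Algebra R L] where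
  carrier : Type u
  [addCommGroup : AddCommGroup carrier]
  [module : Module L carrier]
  d : carrier →ₗ[L] carrier
  sections : R → ℤ → AddSubgroup carrier
  d_d : ∀ x, d (d x) = 0
  d_mem : ∀ {g n x}, x ∈ sections g n → d x ∈ sections g (n + 1)
  smul_mem : ∀ {g n x} (r : R), x ∈ sections g n → algebraMap R L r • x ∈ sections g n
  inv_smul_mem : ∀ {g h n x}, h ∣ g → x ∈ sections g n → (algebraMap R L h)⁻¹ • x ∈ sections g n
  mono : ∀ {g h n} (k : ℕ), g ∣ h ^ k → sections g n ≤ sections h n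
  exists_pow_smul_mem : ∀ {g h n x}, x ∈ sections (g * h) n →
    ∃ k : ℕ, algebraMap R L (h ^ k) • x ∈ sections g n

attribute [instance] LocalizedComplex.addCommGroup LocalizedComplex.module

namespace LocalizedComplex

variable {R : Type*} {L : Type u} [CommRing R] [Field L] [Algebra R L]

section Exactness

variable (C : LocalizedComplex R L) {f g h : R} {n : ℤ}

theorem pow_smul_mem_of_le {x : C.carrier} {j k : ℕ} (hjk : j ≤ k)
    (hx : algebraMap R L (h ^ j) • x ∈ C.sections g n) :
    algebraMap R L (h ^ k) • x ∈ C.sections g n := by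
  obtain ⟨i, rfl⟩ := Nat.exists_eq_add_of_le' hjk
  rw [pow_add, map_mul, mul_smul]
  exact C.smul_mem _ hx

theorem inv_pow_smul_mem {x : C.carrier} (hx : x ∈ C.sections g n) (k : ℕ) :
    (algebraMap R L (g ^ k))⁻¹ • x ∈ C.sections g n := by
  induction k with
  | zero => simpa using hx
  | succ k ih =>
    rw [pow_succ', map_mul, mul_inv, mul_smul]
    exact C.inv_smul_mem dvd_rfl ih

theorem sections_le_mul (g h : R) (n : ℤ) : C.sections g n ≤ C.sections (g * h) n :=
  C.mono 1 (by rw [pow_one]; exact dvd_mul_right _ _)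

/-- Exactness in degree `n` of the localization at `g`. -/
def ExactAt (g : R) (n : ℤ) : Prop :=
  ∀ x ∈ C.sections g n, C.d x = 0 → ∃ y ∈ C.sections g (n - 1), C.d y = x

/-- The ideal of the elements of `R` that turn `x` into a boundary over `D(g)`; a cycle is a
boundary when this ideal contains a power of `g`. -/
def boundaryIdeal (g : R) (n : ℤ) (x : C.carrier) : Ideal R where
  carrier := {r | ∃ y ∈ C.sections g (n - 1), C.d y = algebraMap R L r • x}
  add_mem' := by
    rintro a b ⟨y, hy, hya⟩ ⟨z, hz, hzb⟩
    exact ⟨y + z, add_mem hy hz, by rw [map_add, hya, hzb, map_add, add_smul]⟩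
  zero_mem' := ⟨0, zero_mem _, by rw [map_zero, map_zero, zero_smul]⟩
  smul_mem' := by
    rintro c a ⟨y, hy, hya⟩
    exact ⟨algebraMap R L c • y, C.smul_mem c hy, by
      rw [map_smul, hya, smul_smul, smul_eq_mul, map_mul]⟩

variable {C}

theorem exactAt_of_mem_radical [FaithfulSMul R L] (hg : g ≠ 0) {s : Set R}
    (hs : g ∈ (Ideal.span s).radical) (h : ∀ f ∈ s, C.ExactAt (g * f) n) : C.ExactAt g n := by
  intro x hx hdx
  have hsI : Ideal.span s ≤ (C.boundaryIdeal g n x).radical := by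
    refine Ideal.span_le.mpr fun f hf => ?_
    obtain ⟨y, hy, hdy⟩ := h f hf x (C.sections_le_mul g f n hx) hdx
    obtain ⟨k, hk⟩ := C.exists_pow_smul_mem hy
    exact ⟨k, _, hk, by rw [map_smul, hdy]⟩
  obtain ⟨k, y, hy, hdy⟩ := Ideal.radical_le_radical_iff.mpr hsI hs
  have hgk : algebraMap R L (g ^ k) ≠ 0 := by
    rw [map_pow]
    exact pow_ne_zero _ ((FaithfulSMul.algebraMap_eq_zero_iff R L).not.mpr hg)
  exact ⟨_, C.inv_pow_smul_mem hy k, by rw [map_smul, hdy, inv_smul_smul₀ hgk]⟩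

end Exactness

section Base

variable (L) in
/-- The localization `R[1/g]`, as a subgroup of `L`. -/
def away (g : R) : AddSubgroup L where
  carrier := {x | ∃ (k : ℕ) (a : R), algebraMap R L (g ^ k) * x = algebraMap R L a}
  add_mem' := by
    rintro x y ⟨k, a, ha⟩ ⟨j, b, hb⟩
    refine ⟨k + j, g ^ j * a + g ^ k * b, ?_⟩
    simp only [map_add, map_mul, pow_add, ← ha, ← hb]
    ring
  zero_mem' := ⟨0, 0, by rw [mul_zero, map_zero]⟩
  neg_mem' := by
    rintro x ⟨k, a, ha⟩
    exact ⟨k, -a, by rw [mul_neg, ha, map_neg]⟩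

variable {g h : R} {x : L}

theorem smul_mem_away (r : R) (hx : x ∈ away L g) : algebraMap R L r • x ∈ away L g := by
  obtain ⟨k, a, ha⟩ := hx
  exact ⟨k, r * a, by rw [smul_eq_mul, mul_left_comm, ha, map_mul]⟩

theorem inv_smul_mem_away (hg : h ∣ g) (hx : x ∈ away L g) :
    (algebraMap R L h)⁻¹ • x ∈ away L g := by
  obtain ⟨c, rfl⟩ := hg
  obtain ⟨k, a, ha⟩ := hx
  by_cases h0 : algebraMap R L h = 0
  · rw [h0, inv_zero, zero_smul]
    exact zero_mem _
  · refine ⟨k + 1, c * a, ?_⟩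
    rw [pow_succ', map_mul, map_mul, map_mul, ← ha, smul_eq_mul]
    field_simp

theorem away_mono {k : ℕ} (hg : g ∣ h ^ k) : away L g ≤ away L h := by
  rintro x ⟨j, a, ha⟩
  obtain ⟨c, hc⟩ := hg
  refine ⟨k * j, c ^ j * a, ?_⟩
  rw [pow_mul, hc, mul_pow, map_mul, map_mul, ← ha]
  ring

theorem exists_pow_smul_mem_away (hx : x ∈ away L (g * h)) :
    ∃ k : ℕ, algebraMap R L (h ^ k) • x ∈ away L g := by
  obtain ⟨k, a, ha⟩ := hx
  exact ⟨k, k, a, by rw [← ha, mul_pow, map_mul, smul_eq_mul, mul_assoc]⟩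

variable (R L) in
/-- The field `L` in degree zero, with the localizations of `R` as sections; it plays the role of
the ring `R` itself. -/
def base : LocalizedComplex R L where
  carrier := L
  d := 0
  sections g n := if n = 0 then away L g else ⊥
  d_d _ := rfl
  d_mem _ := zero_mem _
  smul_mem r hx := by
    split_ifs at hx ⊢
    · exact smul_mem_away r hx
    · rw [AddSubgroup.mem_bot.mp hx, smul_zero]
      exact zero_mem _
  inv_smul_mem hg hx := by
    split_ifs at hx ⊢
    · exact inv_smul_mem_away hg hx
    · rw [AddSubgroup.mem_bot.mp hx, smul_zero]
      exact zero_mem _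
  mono k hg := by
    split_ifs
    · exact away_mono hg
    · exact le_rfl
  exists_pow_smul_mem hx := by
    split_ifs at hx ⊢
    · exact exists_pow_smul_mem_away hx
    · exact ⟨0, by rw [AddSubgroup.mem_bot.mp hx, smul_zero]; exact zero_mem _⟩

theorem base_sections_zero (g : R) : (base R L).sections g 0 = away L g :=
  rfl

theorem base_sections_of_ne_zero (g : R) {n : ℤ} (hn : n ≠ 0) : (base R L).sections g n = ⊥ :=
  if_neg hn

theorem base_exactAt_of_ne_zero (g : R) {n : ℤ} (hn : n ≠ 0) : (base R L).ExactAt g n := by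
  intro x hx _
  rw [base_sections_of_ne_zero g hn, AddSubgroup.mem_bot] at hx
  exact ⟨0, zero_mem _, by rw [map_zero, hx]⟩

end Base

section Fiber

/-- The fibre of the localization map `C → C[1/f]`: sections with support in `V(f)`. -/
def fiber (f : R) (C : LocalizedComplex R L) : LocalizedComplex R L where
  carrier := C.carrier × C.carrier
  d := (C.d ∘ₗ LinearMap.fst L _ _).prod (LinearMap.fst L _ _ - C.d ∘ₗ LinearMap.snd L _ _)
  sections g n := (C.sections g n).prod (C.sections (g * f) (n - 1))
  d_d x := by simp [C.d_d]
  d_mem := by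
    rintro g n x ⟨h₁, h₂⟩
    refine ⟨C.d_mem h₁, sub_mem (H := C.sections (g * f) (n + 1 - 1)) ?_ ?_⟩
    · rw [add_sub_cancel_right]
      exact C.sections_le_mul _ _ _ h₁
    · have := C.d_mem h₂
      rwa [sub_add_cancel, ← add_sub_cancel_right n 1] at this
  smul_mem r hx := ⟨C.smul_mem r hx.1, C.smul_mem r hx.2⟩
  inv_smul_mem h hx := ⟨C.inv_smul_mem h hx.1, C.inv_smul_mem (h.mul_right _) hx.2⟩
  mono k hk _ hx := ⟨C.mono k hk hx.1, C.mono (k + 1) (mul_dvd_mul_pow_succ hk _) hx.2⟩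
  exists_pow_smul_mem := by
    rintro g h n x ⟨h₁, h₂⟩
    obtain ⟨j, hj⟩ := C.exists_pow_smul_mem h₁
    obtain ⟨k, hk⟩ := C.exists_pow_smul_mem (mul_right_comm g h f ▸ h₂)
    exact ⟨max j k, C.pow_smul_mem_of_le (le_max_left _ _) hj,
      C.pow_smul_mem_of_le (le_max_right _ _) hk⟩

variable {f g : R} {C : LocalizedComplex R L} {n : ℤ}

theorem fiber_d_eq_iff {a b a' b' : C.carrier} :
    (fiber f C).d (a, b) = ((a', b') : C.carrier × C.carrier) ↔ C.d a = a' ∧ a - C.d b = b' :=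
  Prod.mk_inj

theorem fiber_d_eq_zero_iff {a b : C.carrier} :
    (fiber f C).d (a, b) = 0 ↔ C.d a = 0 ∧ a = C.d b :=
  fiber_d_eq_iff.trans (and_congr_right' sub_eq_zero)

theorem fiber_exactAt_of_dvd (h : f ∣ g) (C : LocalizedComplex R L) (n : ℤ) :
    (fiber f C).ExactAt g n := by
  rintro ⟨a, b⟩ ⟨-, hb⟩ hd
  have hda := (fiber_d_eq_zero_iff.mp hd).2
  have hb' : b ∈ C.sections g (n - 1) := C.mono 2 (by rw [sq]; exact mul_dvd_mul_left g h) hb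
  exact ⟨(b, 0), ⟨hb', zero_mem _⟩, fiber_d_eq_iff.mpr ⟨hda.symm, by rw [map_zero, sub_zero]⟩⟩

theorem ExactAt.fiber (h₁ : C.ExactAt g n) (h₂ : C.ExactAt (g * f) (n - 1)) :
    (C.fiber f).ExactAt g n := by
  rintro ⟨a, b⟩ ⟨ha, hb⟩ hd
  obtain ⟨hda, hdb⟩ := fiber_d_eq_zero_iff.mp hd
  obtain ⟨a', ha', hda'⟩ := h₁ a ha hda
  obtain ⟨b', hb', hdb'⟩ := h₂ (a' - b) (sub_mem (C.sections_le_mul _ _ _ ha') hb)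
    (by rw [map_sub, hda', hdb, sub_self])
  exact ⟨(a', b'), ⟨ha', hb'⟩, fiber_d_eq_iff.mpr ⟨hda', by rw [hdb', sub_sub_cancel]⟩⟩

end Fiber

section MayerVietoris

/-- The tensor product of `C` with the two-term complex `R[1/x] × R[1/y] → R[1/xy]`: by
Mayer–Vietoris, the restriction of `C` to the open set `D(x) ∪ D(y)`. -/
def mayerVietoris (x y : R) (C : LocalizedComplex R L) : LocalizedComplex R L where
  carrier := C.carrier × C.carrier × C.carrier
  d := (C.d ∘ₗ LinearMap.fst L _ _).prod
    ((C.d ∘ₗ LinearMap.fst L _ _ ∘ₗ LinearMap.snd L _ _).prod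
      (LinearMap.fst L _ _ ∘ₗ LinearMap.snd L _ _ - LinearMap.fst L _ _ -
        C.d ∘ₗ LinearMap.snd L _ _ ∘ₗ LinearMap.snd L _ _))
  sections g n := (C.sections (g * x) n).prod
    ((C.sections (g * y) n).prod (C.sections (g * x * y) (n - 1)))
  d_d x := by simp [C.d_d]
  d_mem := by
    rintro g n z ⟨h₁, h₂, h₃⟩
    refine ⟨C.d_mem h₁, C.d_mem h₂, sub_mem (H := C.sections (g * x * y) (n + 1 - 1)) ?_ ?_⟩
    · rw [add_sub_cancel_right]
      refine sub_mem ?_ (C.sections_le_mul _ _ _ h₁)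
      rw [mul_right_comm]
      exact C.sections_le_mul _ _ _ h₂
    · have := C.d_mem h₃
      rwa [sub_add_cancel, ← add_sub_cancel_right n 1] at this
  smul_mem r hx := ⟨C.smul_mem r hx.1, C.smul_mem r hx.2.1, C.smul_mem r hx.2.2⟩
  inv_smul_mem h hx := ⟨C.inv_smul_mem (h.mul_right _) hx.1, C.inv_smul_mem (h.mul_right _) hx.2.1,
    C.inv_smul_mem ((h.mul_right _).mul_right _) hx.2.2⟩
  mono := by
    rintro g h n k hk z ⟨h₁, h₂, h₃⟩
    refine ⟨C.mono (k + 1) (mul_dvd_mul_pow_succ hk x) h₁,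
      C.mono (k + 1) (mul_dvd_mul_pow_succ hk y) h₂, C.mono (k + 1) ?_ h₃⟩
    rw [mul_assoc, mul_assoc]
    exact mul_dvd_mul_pow_succ hk _
  exists_pow_smul_mem := by
    rintro g h n z ⟨h₁, h₂, h₃⟩
    obtain ⟨i, hi⟩ := C.exists_pow_smul_mem (mul_right_comm g h x ▸ h₁)
    obtain ⟨j, hj⟩ := C.exists_pow_smul_mem (mul_right_comm g h y ▸ h₂)
    rw [show g * h * x * y = g * x * y * h by ring] at h₃
    obtain ⟨k, hk⟩ := C.exists_pow_smul_mem h₃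
    exact ⟨max i (max j k), C.pow_smul_mem_of_le (le_max_left _ _) hi,
      C.pow_smul_mem_of_le ((le_max_left _ _).trans (le_max_right _ _)) hj,
      C.pow_smul_mem_of_le ((le_max_right _ _).trans (le_max_right _ _)) hk⟩

variable {x y g : R} {C : LocalizedComplex R L} {n : ℤ}

theorem mayerVietoris_d_eq_iff {a b c a' b' c' : C.carrier} :
    (mayerVietoris x y C).d (a, b, c) = ((a', b', c') : C.carrier × C.carrier × C.carrier) ↔
      C.d a = a' ∧ C.d b = b' ∧ b - a - C.d c = c' :=
  Prod.mk_inj.trans (and_congr_right' Prod.mk_inj)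

theorem mayerVietoris_d_eq_zero_iff {a b c : C.carrier} :
    (mayerVietoris x y C).d (a, b, c) = 0 ↔ C.d a = 0 ∧ C.d b = 0 ∧ b - a = C.d c :=
  mayerVietoris_d_eq_iff.trans (and_congr_right' (and_congr_right' sub_eq_zero))

theorem ExactAt.mayerVietoris (hx : C.ExactAt (g * x) n) (hy : C.ExactAt (g * y) n)
    (hxy : C.ExactAt (g * x * y) (n - 1)) : (C.mayerVietoris x y).ExactAt g n := by
  rintro ⟨a, b, c⟩ ⟨ha, hb, hc⟩ hd
  obtain ⟨hda, hdb, hdc⟩ := mayerVietoris_d_eq_zero_iff.mp hd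
  obtain ⟨a', ha', hda'⟩ := hx a ha hda
  obtain ⟨b', hb', hdb'⟩ := hy b hb hdb
  have ha'' : a' ∈ C.sections (g * x * y) (n - 1) := C.sections_le_mul _ _ _ ha'
  have hb'' : b' ∈ C.sections (g * x * y) (n - 1) := by
    rw [mul_right_comm]
    exact C.sections_le_mul _ _ _ hb'
  obtain ⟨c', hc', hdc'⟩ := hxy (b' - a' - c) (sub_mem (sub_mem hb'' ha'') hc)
    (by rw [map_sub, map_sub, hda', hdb', hdc, sub_self])
  exact ⟨(a', b', c'), ⟨ha', hb', hc'⟩,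
    mayerVietoris_d_eq_iff.mpr ⟨hda', hdb', by rw [hdc', sub_sub_cancel]⟩⟩

theorem mul_mul_dvd_mul_sq (h : x ∣ g) (z : R) : g * x * z ∣ (g * z) ^ 2 := by
  obtain ⟨k, rfl⟩ := h
  exact ⟨k * z, by ring⟩

theorem ExactAt.mayerVietoris_of_dvd_left (h : x ∣ g) (hC : C.ExactAt g n) :
    (C.mayerVietoris x y).ExactAt g n := by
  rintro ⟨a, b, c⟩ ⟨ha, -, hc⟩ hd
  obtain ⟨hda, -, hdc⟩ := mayerVietoris_d_eq_zero_iff.mp hd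
  obtain ⟨a', ha', hda'⟩ := hC a (C.mono 2 (by simpa using mul_mul_dvd_mul_sq h 1) ha) hda
  have hc' : c ∈ C.sections (g * y) (n - 1) := C.mono 2 (mul_mul_dvd_mul_sq h y) hc
  exact ⟨(a', a' + c, 0),
    ⟨C.sections_le_mul _ _ _ ha', add_mem (C.sections_le_mul _ _ _ ha') hc', zero_mem _⟩,
    mayerVietoris_d_eq_iff.mpr ⟨hda', by rw [map_add, hda', ← hdc, add_sub_cancel],
      by rw [map_zero, sub_zero, add_sub_cancel_left]⟩⟩

theorem ExactAt.mayerVietoris_of_dvd_right (h : y ∣ g) (hC : C.ExactAt g n) :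
    (C.mayerVietoris x y).ExactAt g n := by
  rintro ⟨a, b, c⟩ ⟨-, hb, hc⟩ hd
  obtain ⟨-, hdb, hdc⟩ := mayerVietoris_d_eq_zero_iff.mp hd
  obtain ⟨b', hb', hdb'⟩ := hC b (C.mono 2 (by simpa using mul_mul_dvd_mul_sq h 1) hb) hdb
  have hc' : c ∈ C.sections (g * x) (n - 1) :=
    C.mono 2 (mul_right_comm g y x ▸ mul_mul_dvd_mul_sq h x) hc
  exact ⟨(b' - c, b', 0),
    ⟨sub_mem (H := C.sections (g * x) (n - 1)) (C.sections_le_mul _ _ _ hb') hc',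
      C.sections_le_mul _ _ _ hb', zero_mem _⟩,
    mayerVietoris_d_eq_iff.mpr ⟨by rw [map_sub, hdb', ← hdc, sub_sub_cancel], hdb',
      by rw [map_zero, sub_zero, sub_sub_cancel]⟩⟩

end MayerVietoris

section Isomorphisms

/-- An isomorphism of complexes compatible with all localizations; exactness transports along it. -/
structure Iso (C D : LocalizedComplex R L) where
  toAddEquiv : C.carrier ≃+ D.carrier
  d_comm : ∀ x, D.d (toAddEquiv x) = toAddEquiv (C.d x)
  mem_iff : ∀ {g n x}, toAddEquiv x ∈ D.sections g n ↔ x ∈ C.sections g n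

variable {C D E : LocalizedComplex R L}

theorem Iso.exactAt (φ : Iso C D) {g : R} {n : ℤ} (h : D.ExactAt g n) : C.ExactAt g n := by
  intro x hx hdx
  obtain ⟨y, hy, hdy⟩ := h (φ.toAddEquiv x) (φ.mem_iff.mpr hx) (by rw [φ.d_comm, hdx, map_zero])
  obtain ⟨z, rfl⟩ := φ.toAddEquiv.surjective y
  exact ⟨z, φ.mem_iff.mp hy, φ.toAddEquiv.injective (by rw [← φ.d_comm, hdy])⟩

/-- The identity isomorphism. -/
def Iso.refl (C : LocalizedComplex R L) : Iso C C where
  toAddEquiv := AddEquiv.refl _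
  d_comm _ := rfl
  mem_iff := Iff.rfl

/-- The composition of isomorphisms. -/
def Iso.trans (φ : Iso C D) (ψ : Iso D E) : Iso C E where
  toAddEquiv := φ.toAddEquiv.trans ψ.toAddEquiv
  d_comm x := by simp only [AddEquiv.trans_apply, ψ.d_comm, φ.d_comm]
  mem_iff := ψ.mem_iff.trans φ.mem_iff

/-- Functoriality of `fiber`. -/
def Iso.fiber (f : R) (φ : Iso C D) : Iso (C.fiber f) (D.fiber f) where
  toAddEquiv := φ.toAddEquiv.prodCongr φ.toAddEquiv
  d_comm := fun ⟨a, b⟩ => fiber_d_eq_iff.mpr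
    ⟨φ.d_comm a, (congrArg _ (φ.d_comm b)).trans (map_sub φ.toAddEquiv a (C.d b)).symm⟩
  mem_iff := and_congr φ.mem_iff φ.mem_iff

/-- The exchange of `fiber` and `mayerVietoris`, with the sign on the component of bidegree
`(1, 1)` that makes it commute with the differentials. -/
def fiberMayerVietoris (f x y : R) (C : LocalizedComplex R L) :
    Iso (fiber f (mayerVietoris x y C)) (mayerVietoris x y (fiber f C)) where
  toAddEquiv :=
    { toFun := fun p => ((p.1.1, p.2.1), (p.1.2.1, p.2.2.1), (p.1.2.2, -p.2.2.2))
      invFun := fun p => ((p.1.1, p.2.1.1, p.2.2.1), (p.1.2, p.2.1.2, -p.2.2.2))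
      left_inv := by
        rintro ⟨⟨a, b, c⟩, a', b', c'⟩
        simp only [neg_neg]
        rfl
      right_inv := by
        rintro ⟨⟨a, a'⟩, ⟨b, b'⟩, c, c'⟩
        simp only [neg_neg]
        rfl
      map_add' := by
        rintro ⟨⟨a, b, c⟩, a', b', c'⟩ ⟨⟨u, v, w⟩, u', v', w'⟩
        change (((a + u, a' + u'), (b + v, b' + v'), (c + w, -(c' + w'))) :
          (C.carrier × C.carrier) × (C.carrier × C.carrier) × (C.carrier × C.carrier)) =
          ((a + u, a' + u'), (b + v, b' + v'), (c + w, -c' + -w'))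
        rw [neg_add] }
  d_comm := by
    rintro ⟨⟨a, b, c⟩, a', b', c'⟩
    refine mayerVietoris_d_eq_iff.mpr ⟨rfl, rfl, Prod.ext rfl ?_⟩
    change b' - a' - (c - C.d (-c')) = -(c - (b' - a' - C.d c'))
    rw [map_neg]
    abel
  mem_iff := by
    rintro g n ⟨⟨a, b, c⟩, a', b', c'⟩
    change ((a ∈ C.sections (g * x) n ∧ a' ∈ C.sections (g * x * f) (n - 1)) ∧
      (b ∈ C.sections (g * y) n ∧ b' ∈ C.sections (g * y * f) (n - 1)) ∧
      (c ∈ C.sections (g * x * y) (n - 1) ∧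
        -c' ∈ C.sections (g * x * y * f) (n - 1 - 1))) ↔
      ((a ∈ C.sections (g * x) n ∧ b ∈ C.sections (g * y) n ∧
        c ∈ C.sections (g * x * y) (n - 1)) ∧
      (a' ∈ C.sections (g * f * x) (n - 1) ∧ b' ∈ C.sections (g * f * y) (n - 1) ∧
        c' ∈ C.sections (g * f * x * y) (n - 1 - 1)))
    rw [neg_mem_iff, mul_right_comm g x f, mul_right_comm g y f,
      show g * x * y * f = g * f * x * y by ring]
    tauto

end Isomorphisms

section IteratedFiber

/-- The iterated fibre over the elements of `l`: the sections with support in `V(l)`, computed by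
the stable Koszul complex. -/
def iterFiber : List R → LocalizedComplex R L → LocalizedComplex R L
  | [], C => C
  | f :: l, C => fiber f (iterFiber l C)

/-- The exchange of `iterFiber` and `mayerVietoris`. -/
def iterFiberMayerVietoris (x y : R) (C : LocalizedComplex R L) : ∀ l : List R,
    Iso (iterFiber l (mayerVietoris x y C)) (mayerVietoris x y (iterFiber l C))
  | [] => Iso.refl _
  | f :: l => ((iterFiberMayerVietoris x y C l).fiber f).trans (fiberMayerVietoris f x y _)

variable {g : R} {l : List R}

theorem iterFiber_exactAt_of_dvd {f : R} (hf : f ∈ l) (hfg : f ∣ g) (C : LocalizedComplex R L)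
    (n : ℤ) : (iterFiber l C).ExactAt g n := by
  induction l generalizing g n with
  | nil => exact absurd hf List.not_mem_nil
  | cons f' l ih =>
    rcases List.mem_cons.mp hf with rfl | hf
    · exact fiber_exactAt_of_dvd hfg _ n
    · exact (ih hf hfg n).fiber (ih hf (hfg.mul_right _) _)

theorem iterFiber_exactAt [FaithfulSMul R L] (hg : g ≠ 0)
    (hgl : g ∈ (Ideal.span {f | f ∈ l}).radical) (C : LocalizedComplex R L) (n : ℤ) :
    (iterFiber l C).ExactAt g n :=
  exactAt_of_mem_radical hg hgl fun f hf => iterFiber_exactAt_of_dvd hf (dvd_mul_left f g) C n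

variable {C : LocalizedComplex R L} {n : ℤ}

theorem iterFiber_exactAt_of_length_lt (hC : ∀ h, ∀ m : ℤ, 0 < m → C.ExactAt (g * h) m)
    (hl : l.length < n) : (iterFiber l C).ExactAt g n := by
  induction l generalizing g n with
  | nil => exact mul_one g ▸ hC 1 n (by simpa using hl)
  | cons f l ih =>
    rw [List.length_cons] at hl
    push_cast at hl
    exact (ih hC (by omega)).fiber
      (ih (fun h m hm => by rw [mul_assoc]; exact hC _ m hm) (by omega))

variable (C) in
/-- The map from the iterated fibre to `C` that forgets the supports. -/
def iterFiberProj : ∀ l : List R, (iterFiber l C).carrier →ₗ[L] C.carrier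
  | [] => LinearMap.id
  | _ :: l => iterFiberProj l ∘ₗ LinearMap.fst L _ _

theorem iterFiberProj_d (l : List R) (x : (iterFiber l C).carrier) :
    iterFiberProj C l ((iterFiber l C).d x) = C.d (iterFiberProj C l x) := by
  induction l with
  | nil => rfl
  | cons f l ih => exact ih x.1

theorem iterFiberProj_mem {x : (iterFiber l C).carrier} (hx : x ∈ (iterFiber l C).sections g n) :
    iterFiberProj C l x ∈ C.sections g n := by
  induction l with
  | nil => exact hx
  | cons f l ih => exact ih hx.1

theorem exists_iterFiberProj_eq (hC : ∀ f ∈ l, ∀ h, ∀ m : ℤ, 0 < m → C.ExactAt (f * h) m)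
    (hl : l.length ≤ n) {e : C.carrier} (he : e ∈ C.sections g n) (hde : C.d e = 0) :
    ∃ x ∈ (iterFiber l C).sections g n, (iterFiber l C).d x = 0 ∧ iterFiberProj C l x = e := by
  induction l with
  | nil => exact ⟨e, he, hde, rfl⟩
  | cons f l ih =>
    rw [List.length_cons] at hl
    push_cast at hl
    obtain ⟨x, hx, hdx, hpx⟩ := ih (fun f hf => hC f (List.mem_cons_of_mem _ hf)) (by omega)
    have hexact : (iterFiber l C).ExactAt (g * f) n := by
      refine iterFiber_exactAt_of_length_lt (fun h m hm => ?_) (by omega)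
      rw [mul_comm g, mul_assoc]
      exact hC f List.mem_cons_self _ m hm
    obtain ⟨b, hb, hdb⟩ := hexact x (sections_le_mul _ _ _ _ hx) hdx
    exact ⟨(x, b), ⟨hx, hb⟩, fiber_d_eq_zero_iff.mpr ⟨hdx, hdb.symm⟩, hpx⟩

end IteratedFiber

section PairsComplex

variable (R L) in
/-- The iterated Mayer–Vietoris complex over `base`: it computes the cohomology of the open set
`⋂ p ∈ ps, D(p.1) ∪ D(p.2)`, and its component of top degree `ps.length` is `L`. -/
def pairsComplex : List (R × R) → LocalizedComplex R L
  | [] => base R L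
  | p :: ps => mayerVietoris p.1 p.2 (pairsComplex ps)

variable {g : R} {l : List R} {ps : List (R × R)} {n : ℤ}

theorem iterFiber_pairsComplex_exactAt [FaithfulSMul R L] [IsDomain R] (hg : g ≠ 0)
    (hps : ∀ p ∈ ps, p.1 ≠ 0 ∧ p.2 ≠ 0)
    (h : Ideal.span {g} * (ps.map fun p => Ideal.span {p.1, p.2}).prod ≤
      (Ideal.span {f | f ∈ l}).radical) :
    (iterFiber l (pairsComplex R L ps)).ExactAt g n := by
  induction ps generalizing g n with
  | nil =>
    refine iterFiber_exactAt hg ?_ _ n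
    simpa [Ideal.span_singleton_le_iff_mem] using h
  | cons p ps ih =>
    have hp := hps p List.mem_cons_self
    have hmul : ∀ z ∈ Ideal.span {p.1, p.2}, z ≠ 0 → ∀ m,
        (iterFiber l (pairsComplex R L ps)).ExactAt (g * z) m := fun z hz hz0 m => by
      refine ih (mul_ne_zero hg hz0) (fun q hq => hps q (List.mem_cons_of_mem _ hq)) (le_trans ?_ h)
      rw [← Ideal.span_singleton_mul_span_singleton, mul_assoc, List.map_cons, List.prod_cons]
      exact Ideal.mul_mono_right (Ideal.mul_mono_left ((Ideal.span_singleton_le_iff_mem _).mpr hz))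
    have hp₁ : p.1 ∈ Ideal.span {p.1, p.2} := Ideal.subset_span (.inl rfl)
    have hp₂ : p.2 ∈ Ideal.span {p.1, p.2} := Ideal.subset_span (.inr rfl)
    refine (iterFiberMayerVietoris p.1 p.2 _ l).exactAt (.mayerVietoris
      (hmul _ hp₁ hp.1 n) (hmul _ hp₂ hp.2 n) ?_)
    rw [mul_assoc]
    exact hmul _ (Ideal.mul_mem_left _ _ hp₂) (mul_ne_zero hp.1 hp.2) _

theorem pairsComplex_exactAt [FaithfulSMul R L]
    (hps : ∀ p ∈ ps, g ∈ (Ideal.span {p.1, p.2}).radical) (hn : n ≠ 0) :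
    (pairsComplex R L ps).ExactAt g n := by
  induction ps generalizing g with
  | nil => exact base_exactAt_of_ne_zero g hn
  | cons p ps ih =>
    have hps' : ∀ c, (pairsComplex R L ps).ExactAt (g * c) n := fun c =>
      ih fun q hq => Ideal.mul_mem_right _ _ (hps q (List.mem_cons_of_mem _ hq))
    rcases eq_or_ne g 0 with rfl | hg
    · exact .mayerVietoris_of_dvd_left (dvd_zero _) (zero_mul (0 : R) ▸ hps' 0)
    · refine exactAt_of_mem_radical hg (hps p List.mem_cons_self) ?_
      rintro f (rfl | rfl)
      · exact .mayerVietoris_of_dvd_left (dvd_mul_left _ _) (hps' _)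
      · exact .mayerVietoris_of_dvd_right (dvd_mul_left _ _) (hps' _)

/-- Every cycle lifts to one with support in `V(l)`, and such a cycle is a boundary over `D(g)`
because the part of the open set in `D(g)` is contained in `D(l)`, the complement of `V(l)`. -/
theorem pairsComplex_exactAt_length [FaithfulSMul R L] [IsDomain R] (hg : g ≠ 0)
    (hlen : l.length ≤ ps.length) (hps : ∀ p ∈ ps, p.1 ≠ 0 ∧ p.2 ≠ 0)
    (hl : ∀ p ∈ ps, Ideal.span {f | f ∈ l} ≤ (Ideal.span {p.1, p.2}).radical)
    (h : Ideal.span {g} * (ps.map fun p => Ideal.span {p.1, p.2}).prod ≤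
      (Ideal.span {f | f ∈ l}).radical) :
    (pairsComplex R L ps).ExactAt g ps.length := by
  intro e he hde
  have hexact : ∀ f ∈ l, ∀ h, ∀ m : ℤ, 0 < m → (pairsComplex R L ps).ExactAt (f * h) m :=
    fun f hf h m hm => pairsComplex_exactAt
      (fun p hp => Ideal.mul_mem_right h _ (hl p hp (Ideal.subset_span hf))) hm.ne'
  obtain ⟨x, hx, hdx, rfl⟩ := exists_iterFiberProj_eq hexact (by exact_mod_cast hlen) he hde
  obtain ⟨y, hy, rfl⟩ := iterFiber_pairsComplex_exactAt hg hps h x hx hdx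
  exact ⟨_, iterFiberProj_mem hy, (iterFiberProj_d _ _).symm⟩

variable (R L) in
/-- The projection of `pairsComplex` to its component of top degree. -/
def pairsTop : ∀ ps : List (R × R), (pairsComplex R L ps).carrier →ₗ[L] L
  | [] => LinearMap.id
  | _ :: ps => pairsTop ps ∘ₗ LinearMap.snd L _ _ ∘ₗ LinearMap.snd L _ _

variable (R L) in
/-- The inclusion of the component of top degree in `pairsComplex`. -/
def pairsTopIncl : ∀ ps : List (R × R), L →ₗ[L] (pairsComplex R L ps).carrier
  | [] => LinearMap.id
  | _ :: ps => LinearMap.inr L _ _ ∘ₗ LinearMap.inr L _ _ ∘ₗ pairsTopIncl ps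

theorem pairsTop_pairsTopIncl (ps : List (R × R)) (u : L) :
    pairsTop R L ps (pairsTopIncl R L ps u) = u := by
  induction ps with
  | nil => rfl
  | cons _ _ ih => exact ih

theorem d_pairsTopIncl (ps : List (R × R)) (u : L) :
    (pairsComplex R L ps).d (pairsTopIncl R L ps u) = 0 := by
  induction ps with
  | nil => rfl
  | cons p ps ih =>
    exact mayerVietoris_d_eq_zero_iff.mpr ⟨map_zero _, map_zero _, (sub_self _).trans ih.symm⟩

theorem pairsTopIncl_mem {u : L} (hu : u ∈ away L (g * (ps.map fun p => p.1 * p.2).prod)) :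
    pairsTopIncl R L ps u ∈ (pairsComplex R L ps).sections g ps.length := by
  induction ps generalizing g with
  | nil =>
    rw [List.map_nil, List.prod_nil, mul_one] at hu
    exact (base_sections_zero g).ge hu
  | cons p ps ih =>
    refine ⟨zero_mem _, zero_mem _, ?_⟩
    have := ih (g := g * p.1 * p.2) (by simpa [mul_assoc] using hu)
    rw [List.length_cons, Nat.cast_add, Nat.cast_one, add_sub_cancel_right]
    exact this

theorem pairsTop_mem {x : (pairsComplex R L ps).carrier}
    (hx : x ∈ (pairsComplex R L ps).sections g ps.length) :
    pairsTop R L ps x ∈ away L (g * (ps.map fun p => p.1 * p.2).prod) := by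
  induction ps generalizing g with
  | nil =>
    rw [List.map_nil, List.prod_nil, mul_one]
    exact (base_sections_zero g).le hx
  | cons p ps ih =>
    have := ih (g := g * p.1 * p.2) (x := x.2.2) (by simpa using hx.2.2)
    rw [List.map_cons, List.prod_cons, ← mul_assoc, ← mul_assoc]
    exact this

theorem pairsTop_d_mem {P : R} (hP : g * (ps.map fun p => p.1 * p.2).prod = P) {N : AddSubgroup L}
    (hN : ∀ p ∈ ps, ∀ h, h * p.1 = P ∨ h * p.2 = P → away L h ≤ N)
    {x : (pairsComplex R L ps).carrier}
    (hx : x ∈ (pairsComplex R L ps).sections g (ps.length - 1)) :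
    pairsTop R L ps ((pairsComplex R L ps).d x) ∈ N := by
  induction ps generalizing g with
  | nil => exact zero_mem N
  | cons p ps ih =>
    obtain ⟨a, b, c⟩ := x
    obtain ⟨ha, hb, hc⟩ := hx
    rw [List.map_cons, List.prod_cons] at hP
    simp only [List.length_cons, Nat.cast_add, Nat.cast_one, add_sub_cancel_right] at ha hb hc
    have hd : pairsTop R L (p :: ps) ((pairsComplex R L (p :: ps)).d (a, b, c)) =
        pairsTop R L ps b - pairsTop R L ps a - pairsTop R L ps ((pairsComplex R L ps).d c) :=
      (map_sub (pairsTop R L ps) _ _).trans (congrArg (· - _) (map_sub (pairsTop R L ps) b a))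
    rw [hd]
    refine sub_mem (sub_mem ?_ ?_) ?_
    · exact hN p List.mem_cons_self _ (.inl (by rw [← hP]; ring)) (pairsTop_mem hb)
    · exact hN p List.mem_cons_self _ (.inr (by rw [← hP]; ring)) (pairsTop_mem ha)
    · exact ih (by rw [← hP]; ring) (fun q hq => hN q (List.mem_cons_of_mem _ hq)) hc

end PairsComplex

variable (L) in
/-- The fractions that, multiplied by `q ^ k`, land in `I k` for all large `k`. With `I k` generated
by `k`-th powers of factors of `q`, these contain the boundaries in the top degree of
`pairsComplex`. -/
def eventuallyIn (q : R) (I : ℕ → Ideal R) : AddSubgroup L where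
  carrier := {v | ∀ᶠ k in Filter.atTop, ∃ a ∈ I k, algebraMap R L (q ^ k) * v = algebraMap R L a}
  add_mem' := by
    intro u v hu hv
    filter_upwards [hu, hv] with k ⟨a, ha, hau⟩ ⟨b, hb, hbv⟩
    exact ⟨a + b, add_mem ha hb, by rw [mul_add, hau, hbv, map_add]⟩
  zero_mem' := .of_forall fun k => ⟨0, zero_mem _, by rw [mul_zero, map_zero]⟩
  neg_mem' := by
    intro v hv
    filter_upwards [hv] with k ⟨a, ha, hav⟩
    exact ⟨-a, neg_mem ha, by rw [mul_neg, hav, map_neg]⟩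

theorem away_le_eventuallyIn {q z h : R} {I : ℕ → Ideal R} (hz : ∀ k, z ^ k ∈ I k)
    (hq : h * z = q) : away L h ≤ eventuallyIn L q I := by
  rintro v ⟨j, a, ha⟩
  refine Filter.eventually_atTop.mpr ⟨j, fun k hk =>
    ⟨h ^ (k - j) * a * z ^ k, Ideal.mul_mem_left _ _ (hz k), ?_⟩⟩
  obtain ⟨i, rfl⟩ := Nat.exists_eq_add_of_le' hk
  rw [Nat.add_sub_cancel, map_mul, map_mul, ← ha, ← hq, mul_pow, pow_add h, map_mul, map_mul]
  ring

end LocalizedComplex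

open LocalizedComplex in
/-- The product of the `p.1 * p.2` is inverse to a class in the top degree of `pairsComplex`, which
is a boundary by exactness. -/
theorem exists_mul_list_prod_pow_mem {R : Type*} [CommRing R] [IsDomain R] {w : R} (hw : w ≠ 0)
    {l : List R} {ps : List (R × R)} (hlen : l.length ≤ ps.length)
    (hps : ∀ p ∈ ps, p.1 ≠ 0 ∧ p.2 ≠ 0)
    (hl : ∀ p ∈ ps, Ideal.span {f | f ∈ l} ≤ (Ideal.span {p.1, p.2}).radical)
    (h : Ideal.span {w} * (ps.map fun p => Ideal.span {p.1, p.2}).prod ≤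
      (Ideal.span {f | f ∈ l}).radical) :
    ∃ k : ℕ, w ^ (k + 1) * (ps.map fun p => p.1 * p.2).prod ^ k ∈
      ⨆ p ∈ ps, Ideal.span {p.1 ^ (k + 1), p.2 ^ (k + 1)} := by
  let L := FractionRing R
  set Q := (ps.map fun p => p.1 * p.2).prod with hQ
  let I : ℕ → Ideal R := fun k => ⨆ p ∈ ps, Ideal.span {p.1 ^ k, p.2 ^ k}
  have hinj : Function.Injective (algebraMap R L) := IsFractionRing.injective R L
  have hQL : algebraMap R L Q ≠ 0 := by
    rw [Ne, FaithfulSMul.algebraMap_eq_zero_iff R L, hQ, List.prod_eq_zero_iff, List.mem_map]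
    rintro ⟨p, hp, h0⟩
    exact mul_ne_zero (hps p hp).1 (hps p hp).2 h0
  have hu : (algebraMap R L Q)⁻¹ ∈ away L (w * Q) :=
    ⟨1, w, by rw [pow_one, map_mul, mul_assoc, mul_inv_cancel₀ hQL, mul_one]⟩
  obtain ⟨x, hx, hdx⟩ := pairsComplex_exactAt_length (L := L) hw hlen hps hl h _
    (pairsTopIncl_mem hu) (d_pairsTopIncl _ _)
  have haway : ∀ p ∈ ps, ∀ h, h * p.1 = w * Q ∨ h * p.2 = w * Q →
      away L h ≤ eventuallyIn L (w * Q) I := by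
    intro p hp h hh
    have hI : ∀ k, Ideal.span {p.1 ^ k, p.2 ^ k} ≤ I k := fun k =>
      le_iSup₂ (f := fun (q : R × R) (_ : q ∈ ps) => Ideal.span {q.1 ^ k, q.2 ^ k}) p hp
    rcases hh with hh | hh
    · exact away_le_eventuallyIn (fun k => hI k (Ideal.subset_span (.inl rfl))) hh
    · exact away_le_eventuallyIn (fun k => hI k (Ideal.subset_span (.inr rfl))) hh
  have hmem := pairsTop_d_mem rfl haway hx
  rw [hdx, pairsTop_pairsTopIncl] at hmem
  obtain ⟨k, hk⟩ := Filter.eventually_atTop.mp hmem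
  obtain ⟨a, ha, hav⟩ := hk (k + 1) k.le_succ
  have haQ : w ^ (k + 1) * Q ^ k = a := by
    apply hinj
    rw [← hav, mul_pow, pow_succ Q, ← mul_assoc, map_mul _ _ Q, mul_assoc, mul_inv_cancel₀ hQL,
      mul_one]
  exact ⟨k, haQ ▸ ha⟩

theorem exists_mul_prod_pow_mem {R : Type*} [CommRing R] [IsDomain R] {w : R} (hw : w ≠ 0)
    {r s : ℕ} (hsr : s ≤ r) {f : Fin s → R} {p : Fin r → R × R}
    (hp : ∀ i, (p i).1 ≠ 0 ∧ (p i).2 ≠ 0)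
    (hf : ∀ i, Ideal.span (Set.range f) ≤ (Ideal.span {(p i).1, (p i).2}).radical)
    (h : Ideal.span {w} * ∏ i, Ideal.span {(p i).1, (p i).2} ≤
      (Ideal.span (Set.range f)).radical) :
    ∃ k : ℕ, w ^ (k + 1) * (∏ i, (p i).1 * (p i).2) ^ k ∈
      ⨆ i, Ideal.span {(p i).1 ^ (k + 1), (p i).2 ^ (k + 1)} := by
  have hl : {a | a ∈ List.ofFn f} = Set.range f := Set.ext fun _ => List.mem_ofFn' f _
  simpa only [List.map_ofFn, List.prod_ofFn, List.mem_ofFn', Function.comp_apply,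
    iSup_range] using
    exists_mul_list_prod_pow_mem (l := List.ofFn f) (ps := List.ofFn p) hw
      (by simpa only [List.length_ofFn] using hsr)
      (by simpa only [List.forall_mem_ofFn_iff] using hp)
      (by simpa only [List.forall_mem_ofFn_iff, hl] using hf)
      (by simpa only [List.map_ofFn, List.prod_ofFn, Function.comp_apply, hl] using h)

end LocalizedComplexes

section DisconnectedEdges

variable {n r : ℕ} {G : SimpleGraph (Fin n)} {e : Fin r → Fin n × Fin n}

/-- The edges `e i` are pairwise disconnected in `G`. -/
def IsPairwiseDisconnected (G : SimpleGraph (Fin n)) (e : Fin r → Fin n × Fin n) : Prop :=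
  (∀ i, G.Adj (e i).1 (e i).2) ∧ ∀ i j, i ≠ j →
    (e i).1 ≠ (e j).1 ∧ (e i).1 ≠ (e j).2 ∧ (e i).2 ≠ (e j).1 ∧ (e i).2 ≠ (e j).2 ∧
    ¬ G.Adj (e i).1 (e j).1 ∧ ¬ G.Adj (e i).1 (e j).2 ∧
    ¬ G.Adj (e i).2 (e j).1 ∧ ¬ G.Adj (e i).2 (e j).2

theorem HasPairwiseDisconnectedEdges.le (h : HasPairwiseDisconnectedEdges G r) : r ≤ n := by
  obtain ⟨e, -, hdis⟩ := h
  have hinj : Function.Injective fun i => (e i).1 := fun i j hij => by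
    by_contra hne
    exact (hdis i j hne).1 hij
  simpa using Fintype.card_le_of_injective _ hinj

theorem exists_isPairwiseDisconnected_max (G : SimpleGraph (Fin n)) :
    ∃ e : Fin (maxPairwiseDisconnected G) → Fin n × Fin n, IsPairwiseDisconnected G e :=
  Nat.sSup_mem (s := {r | HasPairwiseDisconnectedEdges G r})
    ⟨0, Fin.elim0, fun i => i.elim0, fun i => i.elim0⟩ ⟨n, fun _ h => h.le⟩

theorem IsPairwiseDisconnected.eq_of_adj (he : IsPairwiseDisconnected G e) {i j : Fin r}
    {v w : Fin n} (hv : v = (e i).1 ∨ v = (e i).2) (hw : w = (e j).1 ∨ w = (e j).2)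
    (hvw : G.Adj v w) : i = j := by
  by_contra hij
  obtain ⟨-, -, -, -, h₁, h₂, h₃, h₄⟩ := he.2 i j hij
  rcases hv with rfl | rfl <;> rcases hw with rfl | rfl <;> contradiction

open scoped Classical in
/-- The exponent of the product of the variables that are not an end of any `e i`. -/
noncomputable def unmatchedExponent (e : Fin r → Fin n × Fin n) : Fin n →₀ ℕ :=
  Finsupp.equivFunOnFinite.symm fun v => if ∃ i, v = (e i).1 ∨ v = (e i).2 then 0 else 1

theorem unmatchedExponent_of_mem {i : Fin r} {v : Fin n} (hv : v = (e i).1 ∨ v = (e i).2) :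
    unmatchedExponent e v = 0 :=
  if_pos ⟨i, hv⟩

theorem unmatchedExponent_of_not_exists {v : Fin n}
    (hv : ¬∃ i, v = (e i).1 ∨ v = (e i).2) : unmatchedExponent e v = 1 :=
  if_neg hv

/-- The exponent of the product of the ends of the `e i`. -/
noncomputable def matchedExponent (e : Fin r → Fin n × Fin n) : Fin n →₀ ℕ :=
  ∑ i, (Finsupp.single (e i).1 1 + Finsupp.single (e i).2 1)

theorem IsPairwiseDisconnected.matchedExponent_of_mem (he : IsPairwiseDisconnected G e) {i : Fin r}
    {v : Fin n} (hv : v = (e i).1 ∨ v = (e i).2) : matchedExponent e v = 1 := by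
  classical
  rw [matchedExponent, Finsupp.finsetSum_apply, Finset.sum_eq_single i]
  · have hne := (he.1 i).ne
    rcases hv with rfl | rfl
    · simp [hne.symm]
    · simp [hne]
  · intro j _ hj
    obtain ⟨h₁, h₂, h₃, h₄, -⟩ := he.2 j i hj
    rcases hv with rfl | rfl <;> simp [*]
  · exact fun hi => absurd (Finset.mem_univ i) hi

theorem monomial_matchedExponent {K : Type*} [CommSemiring K] :
    monomial (matchedExponent e) (1 : K) = ∏ i, (X (e i).1 * X (e i).2) := by
  rw [matchedExponent, monomial_sum_one]
  exact Finset.prod_congr rfl fun i _ => by rw [X, X, monomial_mul, one_mul]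

theorem monomial_mem_of_ne_zero {σ K : Type*} [CommSemiring K] {α : σ →₀ ℕ} {v : σ} (hv : α v ≠ 0)
    {I : Ideal (MvPolynomial σ K)} (hI : X v ∈ I) : monomial α (1 : K) ∈ I :=
  I.mem_of_dvd (X_dvd_monomial.mpr (.inr hv)) hI

variable {K : Type*} [Field K]

theorem coverIdeal_le_span_pair {v w : Fin n} (h : G.Adj v w) :
    coverIdeal K G ≤ Ideal.span {X v, X w} := by
  refine (iInf₂_le s(v, w) h).trans (Ideal.span_mono ?_)
  rintro _ ⟨u, hu, rfl⟩
  rcases Sym2.mem_iff.mp hu with rfl | rfl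
  · exact .inl rfl
  · exact .inr rfl

theorem le_coverIdeal_iff {I : Ideal (MvPolynomial (Fin n) K)} :
    I ≤ coverIdeal K G ↔ ∀ v w, G.Adj v w → I ≤ Ideal.span {X v, X w} := by
  refine ⟨fun h v w hvw => h.trans (coverIdeal_le_span_pair hvw), fun h => le_iInf₂ ?_⟩
  rintro ⟨v, w⟩ hvw
  refine (h v w hvw).trans (Ideal.span_mono ?_)
  rintro _ (rfl | rfl)
  · exact ⟨v, Sym2.mem_mk_left v w, rfl⟩
  · exact ⟨w, Sym2.mem_mk_right v w, rfl⟩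

theorem IsPairwiseDisconnected.span_mul_prod_le_coverIdeal (he : IsPairwiseDisconnected G e) :
    Ideal.span {monomial (unmatchedExponent e) (1 : K)} *
      ∏ i, Ideal.span {X (e i).1, X (e i).2} ≤ coverIdeal K G := by
  refine le_coverIdeal_iff.mpr fun v w hvw => ?_
  have hunmatched : ∀ u, X u ∈ (Ideal.span {X v, X w} : Ideal (MvPolynomial (Fin n) K)) →
      (¬∃ i, u = (e i).1 ∨ u = (e i).2) →
      Ideal.span {monomial (unmatchedExponent e) (1 : K)} ≤ Ideal.span {X v, X w} := by
    intro u hu hu'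
    rw [Ideal.span_singleton_le_iff_mem]
    have hexp := unmatchedExponent_of_not_exists hu'
    exact monomial_mem_of_ne_zero (hexp.trans_ne one_ne_zero) hu
  by_cases hv : ∃ i, v = (e i).1 ∨ v = (e i).2
  · by_cases hw : ∃ i, w = (e i).1 ∨ w = (e i).2
    · obtain ⟨i, hi⟩ := hv
      obtain ⟨j, hj⟩ := hw
      obtain rfl := he.eq_of_adj hi hj hvw
      have hpair : ({X (e i).1, X (e i).2} : Set (MvPolynomial (Fin n) K)) = {X v, X w} := by
        have hne := hvw.ne
        rcases hi with rfl | rfl <;> rcases hj with rfl | rfl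
        · exact absurd rfl hne
        · rfl
        · exact Set.pair_comm _ _
        · exact absurd rfl hne
      have hprod : ∏ i, Ideal.span {X (e i).1, X (e i).2} ≤
          (Ideal.span {X (e i).1, X (e i).2} : Ideal (MvPolynomial (Fin n) K)) :=
        Ideal.prod_le_inf.trans (Finset.inf_le (Finset.mem_univ i))
      exact Ideal.mul_le_right.trans (hprod.trans_eq (congrArg Ideal.span hpair))
    · exact Ideal.mul_le_left.trans (hunmatched w (Ideal.subset_span (.inr rfl)) hw)
  · exact Ideal.mul_le_left.trans (hunmatched v (Ideal.subset_span (.inl rfl)) hv)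

end DisconnectedEdges

section LowerBound

variable {K : Type*} [Field K] {n r : ℕ} {G : SimpleGraph (Fin n)} {e : Fin r → Fin n × Fin n}

theorem algebraMap_SLoc_injective :
    Function.Injective (algebraMap (MvPolynomial (Fin n) K) (SLoc K n)) :=
  IsLocalization.injective _ (mIdeal K n).primeCompl_le_nonZeroDivisors

theorem exists_le_of_monomial_mem_map {T : Set (Fin n →₀ ℕ)} {α : Fin n →₀ ℕ}
    (h : algebraMap _ (SLoc K n) (monomial α (1 : K)) ∈
      (Ideal.span ((fun β => monomial β (1 : K)) '' T)).map
        (algebraMap (MvPolynomial (Fin n) K) (SLoc K n))) :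
    ∃ β ∈ T, β ≤ α := by
  obtain ⟨δ, hδ, hmem⟩ :=
    (IsLocalization.algebraMap_mem_map_algebraMap_iff (mIdeal K n).primeCompl _ _ _).mp h
  have hδ0 : coeff 0 δ ≠ 0 := by
    rwa [Ideal.mem_primeCompl_iff, mIdeal_eq_ker, RingHom.mem_ker, constantCoeff_eq] at hδ
  refine mem_ideal_span_monomial_image.mp hmem α ?_
  rwa [mem_support_iff, coeff_mul_monomial', if_pos le_rfl, tsub_self, mul_one]

/-- The exponent of `x_v` in the monomial is `k` for every end `v` of an edge `e i`. -/
theorem IsPairwiseDisconnected.monomial_notMem_map (he : IsPairwiseDisconnected G e) (k : ℕ) :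
    algebraMap _ (SLoc K n)
        (monomial ((k + 1) • unmatchedExponent e + k • matchedExponent e) (1 : K)) ∉
      (⨆ i, Ideal.span {X (e i).1 ^ (k + 1), X (e i).2 ^ (k + 1)}).map
        (algebraMap (MvPolynomial (Fin n) K) (SLoc K n)) := by
  intro hmem
  let T : Set (Fin n →₀ ℕ) := {α | ∃ i v, (v = (e i).1 ∨ v = (e i).2) ∧ α = .single v (k + 1)}
  have hT : ⨆ i, Ideal.span {X (e i).1 ^ (k + 1), X (e i).2 ^ (k + 1)} ≤
      Ideal.span ((fun α => monomial α (1 : K)) '' T) := by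
    refine iSup_le fun i => Ideal.span_mono ?_
    rintro _ (rfl | rfl)
    · exact ⟨_, ⟨i, _, .inl rfl, rfl⟩, X_pow_eq_monomial.symm⟩
    · exact ⟨_, ⟨i, _, .inr rfl, rfl⟩, X_pow_eq_monomial.symm⟩
  obtain ⟨_, ⟨i, v, hv, rfl⟩, hle⟩ := exists_le_of_monomial_mem_map (Ideal.map_mono hT hmem)
  have hlev := hle v
  simp [unmatchedExponent_of_mem hv, he.matchedExponent_of_mem hv] at hlev

theorem IsPairwiseDisconnected.lt_ara (he : IsPairwiseDisconnected G e) :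
    r < ara ((coverIdeal K G).map (algebraMap (MvPolynomial (Fin n) K) (SLoc K n))) := by
  set φ := algebraMap (MvPolynomial (Fin n) K) (SLoc K n)
  have hinj : Function.Injective φ := algebraMap_SLoc_injective
  have : IsDomain (SLoc K n) :=
    IsLocalization.isDomain_localization (mIdeal K n).primeCompl_le_nonZeroDivisors
  obtain ⟨f, hf⟩ := exists_radical_span_range_eq_of_fg
    (IsNoetherian.noetherian ((coverIdeal K G).map φ))
  have hne : ∀ p, p ≠ 0 → φ p ≠ 0 := fun p => (map_ne_zero_iff φ hinj).mpr
  have hpair : ∀ i, (Ideal.span {X (e i).1, X (e i).2}).map φ =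
      Ideal.span {φ (X (e i).1), φ (X (e i).2)} := fun i => by
    rw [Ideal.map_span, Set.image_pair]
  have hprod : (∏ i, Ideal.span {X (e i).1, X (e i).2}).map φ =
      ∏ i, Ideal.span {φ (X (e i).1), φ (X (e i).2)} :=
    (map_prod (Ideal.mapHom φ) _ _).trans (Finset.prod_congr rfl fun i _ => hpair i)
  have hle : ∀ i, Ideal.span (Set.range f) ≤
      (Ideal.span {φ (X (e i).1), φ (X (e i).2)}).radical := fun i => by
    rw [← Ideal.radical_le_radical_iff, hf, ← hpair]
    exact Ideal.radical_mono (Ideal.map_mono (coverIdeal_le_span_pair (he.1 i)))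
  have hge : Ideal.span {φ (monomial (unmatchedExponent e) 1)} *
      ∏ i, Ideal.span {φ (X (e i).1), φ (X (e i).2)} ≤ (Ideal.span (Set.range f)).radical := by
    have := Ideal.map_mono (f := φ) (he.span_mul_prod_le_coverIdeal (K := K))
    rw [Ideal.map_mul, hprod, Ideal.map_span, Set.image_singleton] at this
    rw [hf]
    exact this.trans Ideal.le_radical
  by_contra! hr
  obtain ⟨k, hk⟩ := exists_mul_prod_pow_mem (hne _ (monomial_eq_zero.not.mpr one_ne_zero)) hr
    (p := fun i => (φ (X (e i).1), φ (X (e i).2)))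
    (fun i => ⟨hne _ (X_ne_zero _), hne _ (X_ne_zero _)⟩) hle hge
  have hmonomial : monomial ((k + 1) • unmatchedExponent e + k • matchedExponent e) (1 : K) =
      monomial (unmatchedExponent e) 1 ^ (k + 1) * (∏ i, (X (e i).1 * X (e i).2)) ^ k := by
    rw [← monomial_matchedExponent, monomial_pow, monomial_pow, monomial_mul, one_pow, one_pow,
      one_mul]
  refine he.monomial_notMem_map (K := K) k ?_
  simpa only [hmonomial, Ideal.map_iSup, Ideal.map_span, Set.image_pair, map_pow, map_mul,
    map_prod] using hk

end LowerBound

/-- Let `K` be an infinite field and `G` a graph such that `gdim(G) − 1`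
equals the maximum size of a set of pairwise disconnected edges of `G`. Then
`ara(J(G)S_m) = gdim(G)`. -/
theorem ara_coverIdeal_eq_gdim (K : Type*) [Field K] [Infinite K] {n : ℕ}
    (G : SimpleGraph (Fin n)) (hiso : ∀ v : Fin n, ∃ w, G.Adj v w)
    (h : gdim G - 1 = maxPairwiseDisconnected G) :
    ara ((coverIdeal K G).map (algebraMap (MvPolynomial (Fin n) K) (SLoc K n))) = gdim G := by
  refine le_antisymm (ara_map_coverIdeal_le_gdim hiso) ?_
  obtain ⟨e, he⟩ := exists_isPairwiseDisconnected_max G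
  exact Nat.le_of_pred_lt (h.trans_lt he.lt_ara)
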